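/- Suppose H_0 is twice continuously differentiable on [0,1]. Then with η := 4g Σ_{i=1,3,5,…} 1/((G+i)·i·(i+2)) ∈ (0,1), there exists a constant C > 0 such that for every n ≥ 0 and every x ∈ [0,1], |H_n(x) − (3 log G)^{−1} log((G+1)(G−1+x)/((G−1)(G+1−x)))| ≤ C · η^n. -/

import Mathlib

open Real MeasureTheory Filter Set
open scoped ENNReal NNReal Classical

namespace OCF

/-- The golden ratio `G = (1+√5)/2`. -/
noncomputable def G : ℝ := (1 + Real.sqrt 5) / 2

/-- `g = (√5-1)/2`. -/
noncomputable def gg : ℝ := (Real.sqrt 5 - 1) / 2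

/-- The odd Gauss map. -/
noncomputable def T (x : ℝ) : ℝ :=
  if x = 0 then 0
  else if Odd ⌊1 / x⌋ then Int.fract (1 / x) else 1 - Int.fract (1 / x)

/-- `eps x n` is `ε_n(x)`; by convention `ε_0(x) = 1`. -/
noncomputable def eps (x : ℝ) : ℕ → ℤ
  | 0 => 1
  | n + 1 => if Odd ⌊1 / (T^[n] x)⌋ then 1 else -1

/-- `a x n` is the `n`-th odd partial quotient `a_n(x)` (for `n ≥ 1`). -/
noncomputable def a (x : ℝ) : ℕ → ℤ
  | 0 => 1
  | n + 1 => if Odd ⌊1 / (T^[n] x)⌋ then ⌊1 / (T^[n] x)⌋ else 1 + ⌊1 / (T^[n] x)⌋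

/-- `r x n = r_n(x) = a_n(x) + ε_n(x) Tⁿ(x)` for `n ≥ 1`. -/
noncomputable def r (x : ℝ) (n : ℕ) : ℝ := (a x n : ℝ) + (eps x n : ℝ) * T^[n] x

/-- The distribution functions: `H μ 0 x = μ([0,x])` and, for `n ≥ 1`,
`H μ n x = μ({y ∈ (0,1) : y irrational, 1/r_{n+1}(y) < x})`. -/
noncomputable def H (μ : Measure ℝ) : ℕ → ℝ → ℝ
  | 0 => fun x => (μ (Set.Icc 0 x)).toReal
  | n + 1 => fun x =>
      (μ {y | y ∈ Set.Ioo (0 : ℝ) 1 ∧ Irrational y ∧ 1 / r y (n + 2) < x}).toReal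

/-- `h μ n x = H_n'(x) / ((x+G-1)⁻¹ - (x-G-1)⁻¹)`, the derivative being taken within `[0,1]`. -/
noncomputable def h (μ : Measure ℝ) (n : ℕ) (x : ℝ) : ℝ :=
  derivWithin (H μ n) (Set.Icc 0 1) x / ((x + G - 1)⁻¹ - (x - G - 1)⁻¹)

/-- `η = 4g Σ_{i odd} 1/((G+i) i (i+2))`. -/
noncomputable def eta : ℝ :=
  4 * gg * ∑' m : ℕ, 1 / ((G + (2 * (m : ℝ) + 1)) * (2 * (m : ℝ) + 1) * (2 * (m : ℝ) + 3))

end OCF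

open OCF

/-!
Conjugating the Perron–Frobenius operator of `T` by the invariant density `1/(x+G-1) + 1/(G+1-x)`
gives an averaging operator over the preimages `1 / branch j x` of `x`, and the density of `Hₙ`
with respect to the invariant measure is its `n`-th iterate applied to that of `H₀`. The weights
`branchProb j x` telescope, and their partial sums decrease in `x`: a larger `x` shifts mass to
smaller preimages. So moving the weights from `x` to `y ≥ x` can only lower the average of an
increasing function, and so can moving the points along the even branches, which are decreasing.
Only the odd branches push it up, by an amount controlled by a telescoping sum. If `|Δh|` is
dominated by `M Δgauge`, this applies to the increasing functions `M gauge ± h`; since the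
transform of `gauge` is explicit, the new oscillation is at most `0.37 M Δgauge`, and `0.37 ≤ η`.
A function of mean `1 / (3 log G)` with oscillation `O(0.37ⁿ)` is that constant up to `O(0.37ⁿ)`,
and integrating over `[0, x]` gives the theorem.
-/

namespace OCF

open scoped Topology

/-! ### Telescoping and summation by parts -/

lemma sum_range_sub_add {M : Type*} [AddCommGroup M] (f : ℕ → M) (k n : ℕ) :
    ∑ i ∈ Finset.range n, (f i - f (i + k)) =
      ∑ i ∈ Finset.range k, f i - ∑ i ∈ Finset.range k, f (n + i) := by
  have h₁ := Finset.sum_range_add f n k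
  rw [add_comm n k, Finset.sum_range_add] at h₁
  simp only [Finset.sum_sub_distrib, add_comm _ k]
  rwa [sub_eq_sub_iff_add_eq_add, eq_comm]

lemma hasSum_sub_add {f : ℕ → ℝ} (k : ℕ) (hf : ∀ i, f (i + k) ≤ f i)
    (hf₀ : Tendsto f atTop (𝓝 0)) :
    HasSum (fun i ↦ f i - f (i + k)) (∑ i ∈ Finset.range k, f i) := by
  rw [hasSum_iff_tendsto_nat_of_nonneg fun i ↦ sub_nonneg.2 (hf i)]
  simp only [sum_range_sub_add]
  have hshift : Tendsto (fun n ↦ ∑ i ∈ Finset.range k, f (n + i)) atTop (𝓝 0) := by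
    simpa using tendsto_finsetSum (Finset.range k) fun i _ ↦ hf₀.comp (tendsto_add_atTop_nat i)
  simpa using hshift.const_sub (∑ i ∈ Finset.range k, f i)

lemma sum_range_mul_nonpos_of_antitone {d φ : ℕ → ℝ}
    (hd : ∀ n, ∑ i ∈ Finset.range n, d i ≤ 0) (hφ : Antitone φ) (hφ₀ : ∀ n, 0 ≤ φ n) (n : ℕ) :
    ∑ i ∈ Finset.range n, φ i * d i ≤ 0 := by
  have hparts := Finset.sum_range_by_parts φ d n
  simp only [smul_eq_mul] at hparts
  rw [hparts, sub_nonpos]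
  refine (mul_nonpos_of_nonneg_of_nonpos (hφ₀ _) (hd n)).trans (Finset.sum_nonneg fun i _ ↦ ?_)
  exact mul_nonneg_of_nonpos_of_nonpos (sub_nonpos.2 (hφ i.le_succ)) (hd _)

/-! ### Real functions -/

lemma tendsto_one_div_add_atTop (c : ℝ) : Tendsto (fun u : ℝ ↦ 1 / (u + c)) atTop (𝓝 0) :=
  tendsto_const_nhds.div_atTop (tendsto_atTop_add_const_right _ _ tendsto_id)

lemma antitoneOn_one_div_add {c : ℝ} (hc : -1 < c) :
    AntitoneOn (fun u : ℝ ↦ 1 / (u + c)) (Ici 1) := fun u hu v _ huv ↦ by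
  rw [mem_Ici] at hu
  have : 0 < u + c := by linarith
  dsimp only
  gcongr

lemma hasDerivAt_div_one_add_mul {c y : ℝ} (h : 1 + c * y ≠ 0) :
    HasDerivAt (fun y ↦ y / (1 + c * y)) (1 / (1 + c * y) ^ 2) y :=
  ((hasDerivAt_id' y).div (((hasDerivAt_id' y).const_mul c).const_add 1) h).congr_deriv (by ring)

lemma hasDerivAt_one_div_add {u c : ℝ} (hu : u + c ≠ 0) :
    HasDerivAt (fun u ↦ 1 / (u + c)) (-(1 / (u + c) ^ 2)) u := by
  simpa [neg_div] using ((hasDerivAt_id' u).add_const c).fun_inv hu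

lemma isBounded_image_of_monotoneOn {φ : ℝ → ℝ} {a b : ℝ} (hφ : MonotoneOn φ (Icc a b)) :
    Bornology.IsBounded (φ '' Icc a b) :=
  (Metric.isBounded_Icc _ _).subset hφ.mapsTo_Icc.image_subset

lemma exists_lipschitzOnWith_mul {α R : Type*} [PseudoMetricSpace α] [SeminormedRing R]
    {s : Set α} {f g : α → R} {K L : ℝ≥0} (hf : LipschitzOnWith K f s)
    (hg : LipschitzOnWith L g s) (hfs : Bornology.IsBounded (f '' s))
    (hgs : Bornology.IsBounded (g '' s)) :
    ∃ C, LipschitzOnWith C (fun x ↦ f x * g x) s := by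
  obtain ⟨A, hA, hfA⟩ := hfs.exists_pos_norm_le
  obtain ⟨B, hB, hgB⟩ := hgs.exists_pos_norm_le
  refine ⟨Real.toNNReal (A * L + K * B), .of_dist_le_mul fun x hx y hy ↦ ?_⟩
  rw [Real.coe_toNNReal _ (by positivity), dist_eq_norm]
  calc ‖f x * g x - f y * g y‖ = ‖f x * (g x - g y) + (f x - f y) * g y‖ := by
        rw [mul_sub, sub_mul, sub_add_sub_cancel]
    _ ≤ ‖f x‖ * ‖g x - g y‖ + ‖f x - f y‖ * ‖g y‖ :=
        norm_add_le_of_le (norm_mul_le _ _) (norm_mul_le _ _)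
    _ ≤ A * (L * dist x y) + K * dist x y * B := by
        gcongr
        · exact hfA _ (mem_image_of_mem f hx)
        · exact dist_eq_norm (g x) (g y) ▸ hg.dist_le_mul x hx y hy
        · exact dist_eq_norm (f x) (f y) ▸ hf.dist_le_mul x hx y hy
        · exact hgB _ (mem_image_of_mem g hy)
    _ = (A * L + K * B) * dist x y := by ring

/-! ### Measures and integrals -/

lemma isFiniteMeasure_withDensity_ofReal_of_continuousOn {f : ℝ → ℝ} {a b : ℝ}
    (hf : ContinuousOn f (Icc a b)) :
    IsFiniteMeasure ((volume.restrict (Icc a b)).withDensity fun t ↦ ENNReal.ofReal (f t)) :=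
  isFiniteMeasure_withDensity_ofReal hf.integrableOn_Icc.hasFiniteIntegral

lemma withDensity_real_Iic_eq_sub {F f : ℝ → ℝ} {a b x : ℝ}
    (hF : ∀ t ∈ Icc a b, HasDerivWithinAt F (f t) (Icc a b) t) (hf : ContinuousOn f (Icc a b))
    (hnonneg : ∀ t ∈ Icc a b, 0 ≤ f t) (hx : x ∈ Icc a b) :
    ((volume.restrict (Icc a b)).withDensity fun t ↦ ENNReal.ofReal (f t)).real (Iic x) =
      F x - F a := by
  have hsub : Icc a x ⊆ Icc a b := Icc_subset_Icc_right hx.2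
  have hinter : Iic x ∩ Icc a b = Icc a x := by
    ext t
    exact ⟨fun ht ↦ ⟨ht.2.1, ht.1⟩, fun ht ↦ ⟨ht.2, hsub ht⟩⟩
  have hftc : ∫ t in a..x, f t = F x - F a :=
    intervalIntegral.integral_eq_sub_of_hasDerivAt_of_le hx.1
      (fun t ht ↦ (hF t (hsub ht)).continuousWithinAt.mono hsub)
      (fun t ht ↦ (hF t (hsub (Ioo_subset_Icc_self ht))).hasDerivAt
        (Icc_mem_nhds ht.1 (ht.2.trans_le hx.2)))
      ((hf.mono hsub).intervalIntegrable_of_Icc hx.1)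
  rw [← hftc, intervalIntegral.integral_of_le hx.1, ← integral_Icc_eq_integral_Ioc,
    integral_eq_lintegral_of_nonneg_ae
      ((ae_restrict_mem measurableSet_Icc).mono fun t ht ↦ hnonneg t (hsub ht))
      ((hf.mono hsub).aestronglyMeasurable measurableSet_Icc),
    measureReal_def, withDensity_apply _ measurableSet_Iic,
    Measure.restrict_restrict measurableSet_Iic, hinter]

lemma ext_of_Iic_of_compl_Icc_null {ν₁ ν₂ : Measure ℝ} [IsFiniteMeasure ν₁] [IsFiniteMeasure ν₂]
    {a b : ℝ} (hab : a ≤ b) (h₁ : ν₁ (Icc a b)ᶜ = 0) (h₂ : ν₂ (Icc a b)ᶜ = 0)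
    (h : ∀ x ∈ Icc a b, ν₁.real (Iic x) = ν₂.real (Iic x)) : ν₁ = ν₂ := by
  refine Measure.ext_of_Iic _ _ fun x ↦ ?_
  rcases lt_or_ge x a with hxa | hax
  · have hsub : Iic x ⊆ (Icc a b)ᶜ := fun t ht ht' ↦ (ht'.1.trans ht).not_gt hxa
    rw [measure_mono_null hsub h₁, measure_mono_null hsub h₂]
  rcases le_total x b with hxb | hbx
  · exact (measureReal_eq_measureReal_iff).1 (h x ⟨hax, hxb⟩)
  · have hIic {ν : Measure ℝ} (hν : ν (Icc a b)ᶜ = 0) : ν (Iic x) = ν (Iic b) := by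
      refine measure_congr ?_
      filter_upwards [mem_ae_iff.2 hν] with t ht
      exact propext ⟨fun _ ↦ ht.2, fun h ↦ le_trans h hbx⟩
    rw [hIic h₁, hIic h₂]
    exact (measureReal_eq_measureReal_iff).1 (h b ⟨hab, le_rfl⟩)

theorem map_withDensity_eq_tsum_branches {ι : Type*} [Countable ι] {S : ℝ → ℝ} (hS : Measurable S)
    {D E : Set ℝ} (hD : MeasurableSet D) {f f' : ι → ℝ → ℝ}
    (hf' : ∀ i, ∀ x ∈ D, HasDerivWithinAt (f i) (f' i x) D x)
    (hSf : ∀ i, ∀ x ∈ D, S (f i x) = x)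
    (hdisj : Pairwise (Function.onFun Disjoint fun i ↦ f i '' D))
    (hE : (⋃ i, f i '' D) =ᵐ[volume] E) {φ : ℝ → ℝ≥0∞}
    (hφ : ∀ i, AEMeasurable (fun x ↦ ENNReal.ofReal |f' i x| * φ (f i x)) (volume.restrict D)) :
    ((volume.restrict E).withDensity φ).map S =
      (volume.restrict D).withDensity fun x ↦ ∑' i, ENNReal.ofReal |f' i x| * φ (f i x) := by
  ext s hs
  have hinj (i : ι) : InjOn (f i) D := LeftInvOn.injOn (f₁' := S) (hSf i)
  have hmono (i : ι) (x : ℝ) (hx : x ∈ s ∩ D) : HasDerivWithinAt (f i) (f' i x) (s ∩ D) x :=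
    (hf' i x hx.2).mono inter_subset_right
  have himage : S ⁻¹' s ∩ ⋃ i, f i '' D = ⋃ i, f i '' (s ∩ D) := by
    rw [inter_iUnion]
    refine iUnion_congr fun i ↦ ?_
    ext z
    constructor
    · rintro ⟨hz, x, hx, rfl⟩
      exact ⟨x, ⟨by simpa [hSf i x hx] using hz, hx⟩, rfl⟩
    · rintro ⟨x, ⟨hxs, hx⟩, rfl⟩
      exact ⟨by simpa [hSf i x hx] using hxs, x, hx, rfl⟩
  calc ((volume.restrict E).withDensity φ).map S s
      = ∫⁻ z in ⋃ i, f i '' (s ∩ D), φ z := by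
        rw [Measure.map_apply hS hs, withDensity_apply _ (hS hs), ← Measure.restrict_congr_set hE,
          Measure.restrict_restrict (hS hs), himage]
    _ = ∑' i, ∫⁻ z in f i '' (s ∩ D), φ z := lintegral_iUnion
        (fun i ↦ measurable_image_of_fderivWithin (hs.inter hD)
          (fun x hx ↦ (hmono i x hx).hasFDerivWithinAt) ((hinj i).mono inter_subset_right))
        (fun i j hij ↦ (hdisj hij).mono (image_mono inter_subset_right)
          (image_mono inter_subset_right)) _
    _ = ∑' i, ∫⁻ x in s ∩ D, ENNReal.ofReal |f' i x| * φ (f i x) := tsum_congr fun i ↦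
        lintegral_image_eq_lintegral_abs_deriv_mul (hs.inter hD) (hmono i)
          ((hinj i).mono inter_subset_right) _
    _ = ∫⁻ x in s ∩ D, ∑' i, ENNReal.ofReal |f' i x| * φ (f i x) :=
        (lintegral_tsum fun i ↦ (hφ i).mono_measure
          (Measure.restrict_mono inter_subset_right le_rfl)).symm
    _ = _ := by rw [withDensity_apply _ hs, Measure.restrict_restrict hs]

lemma abs_setIntegral_sub_average_le {α : Type*} [MeasurableSpace α] {m : Measure α}
    [IsFiniteMeasure m] {k : α → ℝ} {δ : ℝ} (hk : Integrable k m)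
    (hosc : ∀ᵐ s ∂m, ∀ᵐ t ∂m, |k t - k s| ≤ δ) (A : Set α) :
    |∫ t in A, k t ∂m - m.real A * ⨍ t, k t ∂m| ≤ δ * m.real A := by
  rcases eq_zero_or_neZero m with rfl | _
  · simp
  have hpoint : ∀ᵐ s ∂m, ‖k s - ⨍ t, k t ∂m‖ ≤ δ := hosc.mono fun s hs ↦
    mem_closedBall_iff_norm'.1
      ((convex_closedBall (k s) δ).average_mem Metric.isClosed_closedBall hs hk)
  have hint : ∫ t in A, (k t - ⨍ t, k t ∂m) ∂m = ∫ t in A, k t ∂m - m.real A * ⨍ t, k t ∂m := by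
    rw [integral_sub hk.integrableOn (integrable_const _), setIntegral_const, smul_eq_mul]
  rw [← hint]
  exact norm_setIntegral_le_of_norm_le_const_ae (measure_lt_top m A) (ae_restrict_of_ae hpoint)

/-! ### The rate `η` -/

lemma G_sq : G ^ 2 = G + 1 := Real.goldenRatio_sq

lemma lt_G : 1.61803 < G := by
  have : 2.23606 < √5 := Real.lt_sqrt_of_sq_lt (by norm_num)
  unfold G
  linarith

lemma G_lt : G < 1.61804 := by
  have : √5 < 2.23608 := by
    rw [Real.sqrt_lt' (by norm_num)]
    norm_num
  unfold G
  linarith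

lemma gg_eq : gg = G - 1 := by
  unfold gg G
  ring

/-- The `m`-th term of the series defining `eta`. -/
noncomputable def etaTerm (m : ℕ) : ℝ :=
  1 / ((G + (2 * m + 1)) * (2 * m + 1) * (2 * m + 3))

lemma eta_eq : eta = 4 * (G - 1) * ∑' m, etaTerm m := by
  rw [← gg_eq]
  rfl

lemma etaTerm_nonneg (m : ℕ) : 0 ≤ etaTerm m := by
  have := lt_G
  unfold etaTerm
  positivity

lemma etaTerm_le (m : ℕ) :
    etaTerm m ≤ 1 / (5 * (2 * m + 1)) - 1 / (5 * (2 * (m + 1 : ℕ) + 1)) := by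
  have hG := lt_G
  have hsub : 1 / (5 * (2 * m + 1)) - 1 / (5 * (2 * (m + 1 : ℕ) + 1)) =
      1 / (5 / 2 * (2 * m + 1) * (2 * m + 3) : ℝ) := by
    push_cast
    field_simp
    ring
  rw [hsub, etaTerm]
  gcongr
  linarith

lemma hasSum_etaTerm_majorant :
    HasSum (fun m : ℕ ↦ 1 / (5 * (2 * m + 1)) - 1 / (5 * (2 * (m + 1 : ℕ) + 1)) : ℕ → ℝ)
      (1 / 5) := by
  have hlim : Tendsto (fun m : ℕ ↦ 1 / (5 * (2 * (m : ℝ) + 1))) atTop (𝓝 0) :=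
    tendsto_const_nhds.div_atTop <| .const_mul_atTop (by norm_num) <|
      tendsto_atTop_add_const_right _ _ <|
        tendsto_natCast_atTop_atTop.const_mul_atTop (by norm_num)
  have hanti (m : ℕ) : 1 / (5 * (2 * ((m + 1 : ℕ) : ℝ) + 1)) ≤ 1 / (5 * (2 * (m : ℝ) + 1)) := by
    gcongr
    simp
  simpa using hasSum_sub_add 1 hanti hlim

lemma summable_etaTerm : Summable etaTerm :=
  .of_nonneg_of_le etaTerm_nonneg etaTerm_le hasSum_etaTerm_majorant.summable

lemma eta_lt_one : eta < 1 := by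
  have hle : ∑' m, etaTerm m ≤ 1 / 5 :=
    hasSum_le etaTerm_le summable_etaTerm.hasSum hasSum_etaTerm_majorant
  rw [eta_eq]
  nlinarith [lt_G, G_lt]

lemma le_eta : 0.37 ≤ eta := by
  have hterm (m : ℕ) : 1 / ((1.61804 + (2 * m + 1)) * (2 * m + 1) * (2 * m + 3)) ≤ etaTerm m := by
    have := lt_G
    unfold etaTerm
    gcongr
    exact G_lt.le
  have hsum : 0.1497 ≤ ∑' m, etaTerm m := calc
    (0.1497 : ℝ) ≤ ∑ m ∈ Finset.range 7,
        1 / ((1.61804 + (2 * (m : ℝ) + 1)) * (2 * m + 1) * (2 * m + 3)) := by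
      norm_num [Finset.sum_range_succ]
    _ ≤ ∑ m ∈ Finset.range 7, etaTerm m := Finset.sum_le_sum fun m _ ↦ hterm m
    _ ≤ ∑' m, etaTerm m := summable_etaTerm.sum_le_tsum _ fun m _ ↦ etaTerm_nonneg m
  rw [eta_eq]
  nlinarith [lt_G, G_lt]

/-! ### The transfer operator -/

/-- The density `1/(x+G-1) + 1/(G+1-x)` of the `T`-invariant measure, of total mass `3 log G`. -/
noncomputable def invDensity (x : ℝ) : ℝ := 1 / (x + G - 1) + 1 / (G + 1 - x)

/-- The invariant density in the coordinate `u = 1/z`, that is `invDensity (1/u) / u²`. -/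
noncomputable def recipDensity (u : ℝ) : ℝ := 1 / (u + G - 2) - 1 / (u + G)

/-- The inverse branches of `T` in the coordinate `u = 1/z`: the solution of `T z = x` with
`⌊1/z⌋ = j + 1` is `z = 1 / branch j x`. -/
noncomputable def branch (j : ℕ) (x : ℝ) : ℝ := if Even j then j + 1 + x else j + 2 - x

/-- The conditional probability, under the invariant measure, of the `j`-th preimage of `x`. -/
noncomputable def branchProb (j : ℕ) (x : ℝ) : ℝ := recipDensity (branch j x) / invDensity x

/-- The transfer operator of `T` with respect to the invariant measure: the average of `h` over
the preimages of `x`. -/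
noncomputable def transfer (h : ℝ → ℝ) (x : ℝ) : ℝ := ∑' j, branchProb j x * h (1 / branch j x)

lemma invDensity_eq {x : ℝ} (hx : x ∈ Icc 0 1) :
    invDensity x = 2 * G / (G ^ 2 - (1 - x) ^ 2) := by
  have := lt_G
  have h₁ : x + G - 1 ≠ 0 := by linarith [hx.1]
  have h₂ : G + 1 - x ≠ 0 := by linarith [hx.2]
  have h₃ : G ^ 2 - (1 - x) ^ 2 ≠ 0 := by
    rw [show G ^ 2 - (1 - x) ^ 2 = (x + G - 1) * (G + 1 - x) by ring]
    positivity
  unfold invDensity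
  field_simp
  ring

lemma invDensity_pos {x : ℝ} (hx : x ∈ Icc 0 1) : 0 < invDensity x := by
  have := lt_G
  have h₁ : 0 < x + G - 1 := by linarith [hx.1]
  have h₂ : 0 < G + 1 - x := by linarith [hx.2]
  unfold invDensity
  positivity

lemma contDiffOn_invDensity {n : ℕ∞} : ContDiffOn ℝ n invDensity (Icc 0 1) := by
  have hG := lt_G
  refine .add (.div contDiffOn_const (by fun_prop) fun x hx ↦ ?_)
    (.div contDiffOn_const (by fun_prop) fun x hx ↦ ?_) <;> linarith [hx.1, hx.2]

lemma continuousOn_invDensity : ContinuousOn invDensity (Icc 0 1) :=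
  (contDiffOn_invDensity (n := 0)).continuousOn

lemma two_div_invDensity_le {x : ℝ} (hx : x ∈ Icc 0 1) : 2 / invDensity x ≤ G := by
  have := lt_G
  rw [invDensity_eq hx, div_div_eq_mul_div, div_le_iff₀ (by positivity)]
  nlinarith [sq_nonneg (1 - x)]

lemma recipDensity_eq {u : ℝ} (hu : 1 ≤ u) :
    recipDensity u = 2 / ((u + G - 2) * (u + G)) := by
  have := lt_G
  have h₁ : u + G - 2 ≠ 0 := by linarith
  have h₂ : u + G ≠ 0 := by linarith
  unfold recipDensity
  field_simp
  ring

lemma invDensity_one_div {u : ℝ} (hu : 1 ≤ u) : invDensity (1 / u) = u ^ 2 * recipDensity u := by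
  have hG := lt_G
  have h₀ : u ≠ 0 := by linarith
  have h₁ : u + G - 2 ≠ 0 := by linarith
  have h₂ : u + G ≠ 0 := by linarith
  have hmem : 1 / u ∈ Icc 0 1 := ⟨by positivity, div_le_one_of_le₀ hu (by positivity)⟩
  have hfactor : G ^ 2 - (1 - 1 / u) ^ 2 = G * ((u + G - 2) * (u + G)) / u ^ 2 := by
    field_simp
    linear_combination (u ^ 2 - 2 * u + 1 - G) * G_sq
  rw [invDensity_eq hmem, recipDensity_eq hu, hfactor]
  field_simp

lemma recipDensity_nonneg {u : ℝ} (hu : 1 ≤ u) : 0 ≤ recipDensity u := by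
  have := lt_G
  have h₁ : 0 ≤ u + G - 2 := by linarith
  rw [recipDensity_eq hu]
  positivity

lemma antitoneOn_recipDensity : AntitoneOn recipDensity (Ici 1) := fun u hu v hv huv ↦ by
  have := lt_G
  rw [mem_Ici] at hu hv
  have h₁ : 0 < u + G - 2 := by linarith
  have h₂ : 0 < v + G - 2 := by linarith
  rw [recipDensity_eq hu, recipDensity_eq hv]
  gcongr

lemma branch_of_even {j : ℕ} (hj : Even j) (x : ℝ) : branch j x = j + 1 + x := if_pos hj

lemma branch_of_odd {j : ℕ} (hj : Odd j) (x : ℝ) : branch j x = j + 2 - x :=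
  if_neg (Nat.not_even_iff_odd.2 hj)

lemma branch_zero (x : ℝ) : branch 0 x = 1 + x := by simp [branch]

lemma branch_one (x : ℝ) : branch 1 x = 3 - x := by norm_num [branch]

lemma branch_add_two (j : ℕ) (x : ℝ) : branch (j + 2) x = branch j x + 2 := by
  rcases j.even_or_odd with hj | hj
  · rw [branch_of_even hj, branch_of_even (by simpa [Nat.even_add] using hj)]
    push_cast
    ring
  · rw [branch_of_odd hj, branch_of_odd (by simpa [Nat.odd_add] using hj)]
    push_cast
    ring

lemma branch_mem_Icc (j : ℕ) {x : ℝ} (hx : x ∈ Icc 0 1) :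
    branch j x ∈ Icc (j + 1 : ℝ) (j + 2) := by
  unfold branch
  split_ifs <;> constructor <;> linarith [hx.1, hx.2]

lemma one_le_branch (j : ℕ) {x : ℝ} (hx : x ∈ Icc 0 1) : 1 ≤ branch j x := by
  linarith [(branch_mem_Icc j hx).1, j.cast_nonneg (α := ℝ)]

lemma one_div_branch_mem (j : ℕ) {x : ℝ} (hx : x ∈ Icc 0 1) : 1 / branch j x ∈ Icc 0 1 := by
  have := one_le_branch j hx
  exact ⟨by positivity, div_le_one_of_le₀ this (by positivity)⟩

lemma monotone_branch {x : ℝ} (hx : x ∈ Icc 0 1) : Monotone (branch · x) :=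
  monotone_nat_of_le_succ fun j ↦ by
    have h := (branch_mem_Icc (j + 1) hx).1
    push_cast at h
    linarith [(branch_mem_Icc j hx).2]

lemma tendsto_branch_atTop {x : ℝ} (hx : x ∈ Icc 0 1) :
    Tendsto (branch · x) atTop atTop :=
  tendsto_atTop_mono (fun j ↦ by linarith [(branch_mem_Icc j hx).1]) tendsto_natCast_atTop_atTop

lemma hasSum_sub_branch {φ : ℝ → ℝ} (hφ : AntitoneOn φ (Ici 1)) (hφ₀ : Tendsto φ atTop (𝓝 0))
    {x : ℝ} (hx : x ∈ Icc 0 1) :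
    HasSum (fun j ↦ φ (branch j x) - φ (branch j x + 2)) (φ (1 + x) + φ (3 - x)) := by
  have hanti (j : ℕ) : φ (branch (j + 2) x) ≤ φ (branch j x) :=
    hφ (one_le_branch j hx) (one_le_branch _ hx) (monotone_branch hx (by omega))
  have hsum := hasSum_sub_add 2 hanti (hφ₀.comp (tendsto_branch_atTop hx))
  simpa only [Function.comp_apply, branch_add_two, Finset.sum_range_succ, Finset.sum_range_zero,
    zero_add, branch_zero, branch_one] using hsum

lemma recipDensity_eq_sub (u : ℝ) :
    recipDensity u = 1 / (u + (G - 2)) - 1 / (u + 2 + (G - 2)) := by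
  unfold recipDensity
  ring_nf

lemma invDensity_eq_add (x : ℝ) :
    invDensity x = 1 / (1 + x + (G - 2)) + 1 / (3 - x + (G - 2)) := by
  unfold invDensity
  ring_nf

lemma hasSum_branchProb {x : ℝ} (hx : x ∈ Icc 0 1) : HasSum (branchProb · x) 1 := by
  have hsum := hasSum_sub_branch (antitoneOn_one_div_add (by linarith [lt_G]))
    (tendsto_one_div_add_atTop (G - 2)) hx
  simp only [← recipDensity_eq_sub] at hsum
  simpa only [← invDensity_eq_add, div_self (invDensity_pos hx).ne', branchProb] using
    hsum.div_const (invDensity x)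

lemma branchProb_nonneg (j : ℕ) {x : ℝ} (hx : x ∈ Icc 0 1) : 0 ≤ branchProb j x :=
  div_nonneg (recipDensity_nonneg (one_le_branch j hx)) (invDensity_pos hx).le

lemma summable_branchProb_mul {h : ℝ → ℝ} (hh : Bornology.IsBounded (h '' Icc 0 1))
    {x : ℝ} (hx : x ∈ Icc 0 1) {t : ℕ → ℝ} (ht : ∀ j, t j ∈ Icc 0 1) :
    Summable fun j ↦ branchProb j x * h (t j) := by
  obtain ⟨C, hC⟩ := hh.exists_norm_le
  refine .of_norm_bounded ((hasSum_branchProb hx).summable.mul_right C) fun j ↦ ?_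
  rw [norm_mul, Real.norm_of_nonneg (branchProb_nonneg j hx)]
  exact mul_le_mul_of_nonneg_left (hC _ (mem_image_of_mem h (ht j))) (branchProb_nonneg j hx)

lemma hasSum_transfer {h : ℝ → ℝ} (hh : Bornology.IsBounded (h '' Icc 0 1)) {x : ℝ}
    (hx : x ∈ Icc 0 1) :
    HasSum (fun j ↦ branchProb j x * h (1 / branch j x)) (transfer h x) :=
  (summable_branchProb_mul hh hx fun j ↦ one_div_branch_mem j hx).hasSum

lemma transfer_nonneg {h : ℝ → ℝ} (hh : ∀ x ∈ Icc 0 1, 0 ≤ h x) {x : ℝ} (hx : x ∈ Icc 0 1) :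
    0 ≤ transfer h x :=
  tsum_nonneg fun j ↦ mul_nonneg (branchProb_nonneg j hx) (hh _ (one_div_branch_mem j hx))

lemma iterate_transfer_nonneg {h : ℝ → ℝ} (hh : ∀ x ∈ Icc 0 1, 0 ≤ h x) (n : ℕ) :
    ∀ x ∈ Icc 0 1, 0 ≤ transfer^[n] h x := by
  induction n with
  | zero => exact hh
  | succ n ih => rw [Function.iterate_succ_apply']; exact fun x hx ↦ transfer_nonneg ih hx

/-! ### Stochastic monotonicity of the branch probabilities -/

lemma sum_range_branchProb (n : ℕ) {x : ℝ} (hx : x ∈ Icc 0 1) :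
    ∑ j ∈ Finset.range n, branchProb j x =
      1 - (1 / (branch n x + (G - 2)) + 1 / (branch (n + 1) x + (G - 2))) / invDensity x := by
  have hsum := sum_range_sub_add (fun j ↦ 1 / (branch j x + (G - 2))) 2 n
  simp only [branch_add_two, ← recipDensity_eq_sub, Finset.sum_range_succ, Finset.sum_range_zero,
    zero_add, add_zero, branch_zero, branch_one, ← invDensity_eq_add] at hsum
  simp only [branchProb, ← Finset.sum_div]
  rw [hsum, sub_div, div_self (invDensity_pos hx).ne']

lemma branch_tail_eq (n : ℕ) {x : ℝ} (hx : x ∈ Icc 0 1) :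
    (1 / (branch n x + (G - 2)) + 1 / (branch (n + 1) x + (G - 2))) / invDensity x =
      (n + G) / G * ((G ^ 2 - (1 - x) ^ 2) /
        ((n + G) ^ 2 - (if Even n then 1 - x else x) ^ 2)) := by
  have hG := lt_G
  have h₁ := (branch_mem_Icc n hx).1
  have h₂ := (branch_mem_Icc (n + 1) hx).1
  push_cast at h₂
  have hprod : (branch n x + (G - 2)) * (branch (n + 1) x + (G - 2)) =
      (n + G) ^ 2 - (if Even n then 1 - x else x) ^ 2 := by
    rcases n.even_or_odd with h | h
    · rw [branch_of_even h, branch_of_odd h.add_one, if_pos h]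
      push_cast
      ring
    · rw [branch_of_odd h, branch_of_even h.add_one, if_neg (Nat.not_even_iff_odd.2 h)]
      push_cast
      ring
  have hsum : branch n x + (G - 2) + (branch (n + 1) x + (G - 2)) = 2 * (n + G) := by
    rcases n.even_or_odd with h | h
    · rw [branch_of_even h, branch_of_odd h.add_one]
      push_cast
      ring
    · rw [branch_of_odd h, branch_of_even h.add_one]
      push_cast
      ring
  rw [div_add_div _ _ (by linarith) (by linarith), one_mul, mul_one, add_comm, hsum, hprod,
    invDensity_eq hx, div_div_eq_mul_div, div_mul_div_comm, div_mul_eq_mul_div, div_div,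
    div_eq_div_iff]
  · ring
  all_goals rw [← hprod]
  all_goals have : 0 < branch n x + (G - 2) := by linarith
  all_goals have : 0 < branch (n + 1) x + (G - 2) := by linarith
  all_goals positivity

lemma antitoneOn_sum_range_branchProb (n : ℕ) :
    AntitoneOn (fun x ↦ ∑ j ∈ Finset.range n, branchProb j x) (Icc 0 1) := fun x hx y hy hxy ↦ by
  have hG := lt_G
  have : G ≤ n + G := by linarith [n.cast_nonneg (α := ℝ)]
  have hx₀ := hx.1
  have hy₁ := hy.2
  dsimp only
  rw [sum_range_branchProb n hx, sum_range_branchProb n hy, branch_tail_eq n hx,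
    branch_tail_eq n hy]
  gcongr 1 - _ * ?_
  rcases n.even_or_odd with h | h
  · simp only [if_pos h]
    rw [div_le_div_iff₀ (by nlinarith) (by nlinarith)]
    have : 0 ≤ ((n + G) ^ 2 - G ^ 2) * ((1 - x) ^ 2 - (1 - y) ^ 2) :=
      mul_nonneg (by nlinarith) (by nlinarith)
    linarith
  · simp only [if_neg (Nat.not_even_iff_odd.2 h)]
    have hden : 0 < (n + G) ^ 2 - y ^ 2 := by nlinarith
    have hnum : 0 ≤ G ^ 2 - (1 - y) ^ 2 := by nlinarith
    gcongr

lemma antitone_comp_one_div_branch {φ : ℝ → ℝ} (hφ : MonotoneOn φ (Icc 0 1)) {x : ℝ}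
    (hx : x ∈ Icc 0 1) : Antitone fun j ↦ φ (1 / branch j x) := fun i j hij ↦
  hφ (one_div_branch_mem j hx) (one_div_branch_mem i hx) <|
    one_div_le_one_div_of_le (by linarith [one_le_branch i hx]) (monotone_branch hx hij)

lemma tsum_branchProb_sub_mul_nonpos {φ : ℝ → ℝ} (hφ : MonotoneOn φ (Icc 0 1)) {x y : ℝ}
    (hx : x ∈ Icc 0 1) (hy : y ∈ Icc 0 1) (hxy : x ≤ y) :
    ∑' j, (branchProb j y - branchProb j x) * φ (1 / branch j y) ≤ 0 := by
  have hbdd := isBounded_image_of_monotoneOn hφ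
  have hmem (j : ℕ) := one_div_branch_mem j hy
  have hsummable : Summable fun j ↦ (branchProb j y - branchProb j x) * φ (1 / branch j y) := by
    simpa only [sub_mul] using
      (summable_branchProb_mul hbdd hy hmem).sub (summable_branchProb_mul hbdd hx hmem)
  have hpartial (n : ℕ) : ∑ j ∈ Finset.range n, (branchProb j y - branchProb j x) ≤ 0 := by
    rw [Finset.sum_sub_distrib, sub_nonpos]
    exact antitoneOn_sum_range_branchProb n hx hy hxy
  have habel (n : ℕ) : ∑ j ∈ Finset.range n,
      (φ (1 / branch j y) - φ 0) * (branchProb j y - branchProb j x) ≤ 0 :=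
    sum_range_mul_nonpos_of_antitone hpartial
      (fun i j hij ↦ sub_le_sub_right (antitone_comp_one_div_branch hφ hy hij) _)
      (fun j ↦ sub_nonneg.2 (hφ (by simp) (hmem j) (hmem j).1)) n
  have hconst : HasSum (fun j ↦ (branchProb j y - branchProb j x) * φ 0) 0 := by
    simpa using ((hasSum_branchProb hy).sub (hasSum_branchProb hx)).mul_right (φ 0)
  have htend := (hsummable.hasSum.sub hconst).tendsto_sum_nat
  rw [sub_zero] at htend
  refine le_of_tendsto' htend fun n ↦ (habel n).trans_eq' (Finset.sum_congr rfl fun j _ ↦ ?_)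
  ring

/-! ### Contraction in the gauge seminorm -/

/-- The weight against which moduli of continuity on `[0,1]` are measured. It is chosen so that
`recipDensity u * (1 - gauge (1/u))` telescopes under `u ↦ u + 2`, which makes `transfer gauge`
explicit; the parameters `1/2` and `5/2` bring the contraction factor below `η`. -/
noncomputable def gauge (y : ℝ) : ℝ :=
  (G - 9 / 8) * (y / (1 + 1 / 2 * y)) + (49 / 8 - 3 * G) * (y / (1 + 5 / 2 * y))

/-- A function whose decrements under `u ↦ u + 2` dominate the variation of `gauge (1/u)` weighted
by `recipDensity`, so that the contributions of the odd branches telescope. -/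
noncomputable def oddMajorant (u : ℝ) : ℝ := 0.325 * (1 / (u + 1 / 4) ^ 2)

/-- `h` is Lipschitz on `[0,1]` with constant `M` with respect to the distance
`|gauge t - gauge s|`. -/
def GaugeLipschitz (M : ℝ) (h : ℝ → ℝ) : Prop :=
  ∀ s ∈ Icc (0 : ℝ) 1, ∀ t ∈ Icc (0 : ℝ) 1, s ≤ t → |h t - h s| ≤ M * (gauge t - gauge s)

lemma gauge_one_div {u : ℝ} (hu : 1 ≤ u) :
    gauge (1 / u) = (G - 9 / 8) * (1 / (u + 1 / 2)) + (49 / 8 - 3 * G) * (1 / (u + 5 / 2)) := by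
  have h₁ : 1 / u / (1 + 1 / 2 * (1 / u)) = 1 / (u + 1 / 2) := by field_simp
  have h₂ : 1 / u / (1 + 5 / 2 * (1 / u)) = 1 / (u + 5 / 2) := by field_simp
  rw [gauge, h₁, h₂]

lemma hasDerivAt_gauge {y : ℝ} (hy : 0 ≤ y) :
    HasDerivAt gauge ((G - 9 / 8) * (1 / (1 + 1 / 2 * y) ^ 2) +
      (49 / 8 - 3 * G) * (1 / (1 + 5 / 2 * y) ^ 2)) y :=
  ((hasDerivAt_div_one_add_mul (by positivity)).const_mul _).add
    ((hasDerivAt_div_one_add_mul (by positivity)).const_mul _)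

lemma one_div_four_le_deriv_gauge {y : ℝ} (hy : y ∈ Icc 0 1) :
    1 / 4 ≤ (G - 9 / 8) * (1 / (1 + 1 / 2 * y) ^ 2) +
      (49 / 8 - 3 * G) * (1 / (1 + 5 / 2 * y) ^ 2) := by
  have hG := lt_G
  have hG' := G_lt
  obtain ⟨hy₀, hy₁⟩ := hy
  calc (1 / 4 : ℝ) ≤ 0.49 * (1 / (1 + 1 / 2 * 1) ^ 2) + 1.27 * (1 / (1 + 5 / 2 * 1) ^ 2) := by
        norm_num
    _ ≤ (G - 9 / 8) * (1 / (1 + 1 / 2 * y) ^ 2) +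
          (49 / 8 - 3 * G) * (1 / (1 + 5 / 2 * y) ^ 2) := by
        gcongr <;> linarith

lemma sub_le_four_mul_gauge_sub {s t : ℝ} (hs : s ∈ Icc 0 1) (ht : t ∈ Icc 0 1) (hst : s ≤ t) :
    t - s ≤ 4 * (gauge t - gauge s) := by
  have hmono : MonotoneOn (fun y ↦ 4 * gauge y - y) (Icc 0 1) := by
    have hderiv (y : ℝ) (hy : y ∈ Icc 0 1) :=
      ((hasDerivAt_gauge hy.1).const_mul 4).sub (hasDerivAt_id' y)
    refine monotoneOn_of_hasDerivWithinAt_nonneg (convex_Icc 0 1)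
      (fun y hy ↦ (hderiv y hy).continuousAt.continuousWithinAt)
      (fun y hy ↦ (hderiv y (interior_subset hy)).hasDerivWithinAt) fun y hy ↦ ?_
    linarith [one_div_four_le_deriv_gauge (interior_subset hy)]
  linarith [hmono hs ht hst]

lemma monotoneOn_gauge : MonotoneOn gauge (Icc 0 1) := fun s hs t ht hst ↦ by
  linarith [sub_le_four_mul_gauge_sub hs ht hst]

lemma recipDensity_mul_gauge {u : ℝ} (hu : 1 ≤ u) :
    recipDensity u * gauge (1 / u) =
      recipDensity u - (1 / (u + 1 / 2) - 1 / (u + 2 + 1 / 2)) := by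
  have hG := lt_G
  have h₁ : u + G - 2 ≠ 0 := by linarith
  have h₂ : u + G ≠ 0 := by linarith
  have hfactor : (G - 9 / 8) * (1 / (u + 1 / 2)) + (49 / 8 - 3 * G) * (1 / (u + 5 / 2)) =
      1 - (u + G - 2) * (u + G) / ((u + 1 / 2) * (u + 5 / 2)) := by
    field_simp
    linear_combination 32 * G_sq
  rw [gauge_one_div hu, hfactor, recipDensity_eq hu]
  field_simp
  ring

lemma transfer_gauge {x : ℝ} (hx : x ∈ Icc 0 1) :
    transfer gauge x =
      1 - 5 / (2 * G) + 5 * (21 * G - 25) / 8 * (1 / (25 / 4 - (1 - x) ^ 2)) := by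
  have hG := lt_G
  have hfactor : 25 / 4 - (1 - x) ^ 2 = (1 + x + 1 / 2) * (3 - x + 1 / 2) := by ring
  have h₁ : 1 + x + 1 / 2 ≠ 0 := by linarith [hx.1]
  have h₂ : 3 - x + 1 / 2 ≠ 0 := by linarith [hx.2]
  have h₃ : 25 / 4 - (1 - x) ^ 2 ≠ 0 := hfactor ▸ mul_ne_zero h₁ h₂
  have hterm (j : ℕ) : branchProb j x * gauge (1 / branch j x) = branchProb j x -
      (1 / (branch j x + 1 / 2) - 1 / (branch j x + 2 + 1 / 2)) / invDensity x := by
    rw [branchProb, div_mul_eq_mul_div, recipDensity_mul_gauge (one_le_branch j hx), sub_div]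
  have hsum := (hasSum_branchProb hx).sub ((hasSum_sub_branch
    (antitoneOn_one_div_add (by norm_num)) (tendsto_one_div_add_atTop (1 / 2)) hx).div_const
      (invDensity x))
  have htotal : 1 / (1 + x + 1 / 2) + 1 / (3 - x + 1 / 2) = 5 / (25 / 4 - (1 - x) ^ 2) := by
    rw [hfactor, div_add_div _ _ h₁ h₂]
    ring
  rw [transfer, tsum_congr hterm, hsum.tsum_eq, htotal, invDensity_eq hx,
    show G ^ 2 - (1 - x) ^ 2 = G ^ 2 - 25 / 4 + (25 / 4 - (1 - x) ^ 2) by ring]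
  generalize 25 / 4 - (1 - x) ^ 2 = D at h₃ ⊢
  field_simp
  linear_combination (-1000) * G_sq

lemma recipDensity_mul_deriv_gauge_le {u : ℝ} (hu : 2 ≤ u) :
    recipDensity u * ((G - 9 / 8) * (1 / (u + 1 / 2) ^ 2) +
      (49 / 8 - 3 * G) * (1 / (u + 5 / 2) ^ 2)) ≤
      0.65 * (1 / (u + 1 / 4) ^ 3) - 0.65 * (1 / (u + 2 + 1 / 4) ^ 3) := by
  have hG := lt_G
  have hG' := G_lt
  obtain ⟨t, ht, rfl⟩ : ∃ t, 0 ≤ t ∧ u = t + 2 := ⟨u - 2, by linarith, by ring⟩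
  have hrecip : recipDensity (t + 2) ≤ 2 / ((t + 1.618) * (t + 3.618)) := by
    rw [recipDensity_eq (by linarith)]
    gcongr 2 / (?_ * ?_) <;> linarith
  calc _ ≤ 2 / ((t + 1.618) * (t + 3.618)) *
        (0.49304 * (1 / (t + 2 + 1 / 2) ^ 2) + 1.27091 * (1 / (t + 2 + 5 / 2) ^ 2)) := by
        have h₁ : 0 ≤ G - 9 / 8 := by linarith
        have h₂ : 0 ≤ 49 / 8 - 3 * G := by linarith
        refine mul_le_mul hrecip ?_ (by positivity) (by positivity)
        gcongr <;> linarith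
    _ ≤ _ := by
        -- After clearing denominators, the difference is a polynomial in `t` with nonnegative
        -- coefficients.
        rw [← sub_nonneg]
        field_simp
        ring_nf
        positivity

lemma neg_deriv_transfer_gauge_add_le_deriv_gauge {x : ℝ} (hx : x ∈ Icc 0 1) :
    5 * (21 * G - 25) / 4 * ((1 - x) / (25 / 4 - (1 - x) ^ 2) ^ 2) +
        G * (0.65 * (1 / (3 - x + 1 / 4) ^ 3)) ≤
      0.37 * ((G - 9 / 8) * (1 / (1 + 1 / 2 * x) ^ 2) +
        (49 / 8 - 3 * G) * (1 / (1 + 5 / 2 * x) ^ 2)) := by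
  have hG := lt_G
  have hG' := G_lt
  obtain ⟨hx₀, hx₁⟩ := hx
  have hs : 0 ≤ 1 - x := by linarith
  have hx' : 0 < 3 - x + 1 / 4 := by linarith
  have hden : 25 / 4 - (1 - x) ^ 2 = (3 / 2 + x) * (7 / 2 - x) := by ring
  have hprod : 0 < (3 / 2 + x) * (7 / 2 - x) := mul_pos (by linarith) (by linarith)
  rw [hden]
  calc _ ≤ 11.2236 * ((1 - x) / ((3 / 2 + x) * (7 / 2 - x)) ^ 2) +
        1.61804 * (0.65 * (1 / (3 - x + 1 / 4) ^ 3)) := by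
        gcongr
        linarith
    _ ≤ 0.37 * (0.493 * (1 / (1 + 1 / 2 * x) ^ 2) + 1.27088 * (1 / (1 + 5 / 2 * x) ^ 2)) := by
        -- After clearing denominators, the difference is a nonnegative combination of the
        -- polynomials `x ^ i * (1 - x) ^ j` and `x ^ i * (1 - x) ^ j * (2 * x - 1) ^ 2`.
        have h₁ : 0 < 1 + 1 / 2 * x := by positivity
        have h₂ : 0 < 1 + 5 / 2 * x := by positivity
        have hbern (i j : ℕ) := mul_nonneg (pow_nonneg hx₀ i) (pow_nonneg hs j)
        have hsq (i j : ℕ) := mul_nonneg (hbern i j) (sq_nonneg (2 * x - 1))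
        simp only [mul_div_assoc', div_add_div _ _ (pow_pos hprod 2).ne'
          (pow_pos hx' 3).ne', div_add_div _ _ (pow_pos h₁ 2).ne' (pow_pos h₂ 2).ne']
        rw [div_le_div_iff₀ (by positivity) (by positivity)]
        linarith [hbern 0 9, hbern 1 8, hbern 2 7, hbern 3 6, hbern 4 5, hbern 5 4, hbern 6 3,
          hbern 7 2, hbern 8 1, hbern 9 0, hsq 2 5, hsq 3 4, hsq 4 3, hsq 5 2]
    _ ≤ _ := by
        gcongr <;> linarith

lemma hasDerivAt_oddMajorant {u : ℝ} (hu : u + 1 / 4 ≠ 0) :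
    HasDerivAt oddMajorant (-(0.65 * (1 / (u + 1 / 4) ^ 3))) u := by
  have hinv := (((hasDerivAt_id' u).add_const (1 / 4)).fun_pow 2).fun_inv (pow_ne_zero 2 hu)
  simp only [← one_div] at hinv
  refine (hinv.const_mul 0.325).congr_deriv ?_
  generalize u + 1 / 4 = w at hu ⊢
  field_simp
  ring

lemma recipDensity_mul_gauge_sub_le {u v : ℝ} (hv : 2 ≤ v) (hvu : v ≤ u) :
    recipDensity u * (gauge (1 / v) - gauge (1 / u)) ≤
      oddMajorant v - oddMajorant u - (oddMajorant (v + 2) - oddMajorant (u + 2)) := by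
  have hG := lt_G
  have hG' := G_lt
  have hderiv (w : ℝ) (hw : w ∈ Icc v u) :=
    ((hasDerivAt_oddMajorant (by linarith [hw.1])).sub
      ((hasDerivAt_oddMajorant (u := w + 2) (by linarith [hw.1])).comp_add_const w 2)).sub
      ((((hasDerivAt_one_div_add (u := w) (c := 1 / 2) (by linarith [hw.1])).const_mul
        (G - 9 / 8)).add ((hasDerivAt_one_div_add (c := 5 / 2) (by linarith [hw.1])).const_mul
          (49 / 8 - 3 * G))).const_mul (recipDensity u))
  have hanti := antitoneOn_of_hasDerivWithinAt_nonpos (convex_Icc v u)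
    (fun w hw ↦ (hderiv w hw).continuousAt.continuousWithinAt)
    (fun w hw ↦ (hderiv w (interior_subset hw)).hasDerivWithinAt) fun w hw ↦ by
      obtain ⟨hw₁, hw₂⟩ := interior_subset hw
      have h₁ : 0 ≤ G - 9 / 8 := by linarith
      have h₂ : 0 ≤ 49 / 8 - 3 * G := by linarith
      have hmono : recipDensity u ≤ recipDensity w :=
        antitoneOn_recipDensity (by simp; linarith) (by simp; linarith) hw₂
      have hle := (mul_le_mul_of_nonneg_right hmono (by positivity)).trans
        (recipDensity_mul_deriv_gauge_le (hv.trans hw₁))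
      linarith
  have hle := hanti (left_mem_Icc.2 hvu) (right_mem_Icc.2 hvu) hvu
  simp only [Pi.sub_apply, Pi.add_apply] at hle
  rw [gauge_one_div (by linarith), gauge_one_div (by linarith)]
  linarith

lemma hasDerivWithinAt_transfer_gauge {x : ℝ} (hx : x ∈ Icc 0 1) :
    HasDerivWithinAt (transfer gauge)
      (-(5 * (21 * G - 25) / 4 * ((1 - x) / (25 / 4 - (1 - x) ^ 2) ^ 2))) (Icc 0 1) x := by
  have hden : 25 / 4 - (1 - x) ^ 2 ≠ 0 := by nlinarith [hx.1, hx.2]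
  have hinv := ((((hasDerivAt_id' x).const_sub 1).fun_pow 2).const_sub (25 / 4)).fun_inv hden
  simp only [← one_div] at hinv
  refine HasDerivWithinAt.congr_of_mem (((hinv.const_mul (5 * (21 * G - 25) / 8)).const_add
    (1 - 5 / (2 * G))).congr_deriv ?_).hasDerivWithinAt (fun y hy ↦ transfer_gauge hy) hx
  norm_num
  ring

lemma monotoneOn_gauge_add_transfer_gauge_sub_oddMajorant :
    MonotoneOn (fun x ↦ 0.37 * gauge x + transfer gauge x - G * oddMajorant (3 - x))
      (Icc 0 1) := by
  have hderiv (x : ℝ) (hx : x ∈ Icc 0 1) :=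
    (((hasDerivAt_gauge hx.1).const_mul 0.37).hasDerivWithinAt.add
      (hasDerivWithinAt_transfer_gauge hx)).sub
      (((hasDerivAt_oddMajorant (by linarith [hx.2])).comp_const_sub 3 x).const_mul
        G).hasDerivWithinAt
  refine monotoneOn_of_hasDerivWithinAt_nonneg (convex_Icc 0 1)
    (fun x hx ↦ (hderiv x hx).continuousWithinAt)
    (fun x hx ↦ (hderiv x (interior_subset hx)).mono interior_subset) fun x hx ↦ ?_
  linarith [neg_deriv_transfer_gauge_add_le_deriv_gauge (interior_subset hx)]

lemma GaugeLipschitz.nonneg {M : ℝ} {h : ℝ → ℝ} (hh : GaugeLipschitz M h) : 0 ≤ M := by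
  have hpos : 0 < gauge 1 - gauge 0 := by
    linarith [sub_le_four_mul_gauge_sub (s := 0) (t := 1) (by simp) (by simp) zero_le_one]
  have hle := (abs_nonneg _).trans (hh 0 (by simp) 1 (by simp) zero_le_one)
  exact nonneg_of_mul_nonneg_left hle hpos

lemma GaugeLipschitz.neg {M : ℝ} {h : ℝ → ℝ} (hh : GaugeLipschitz M h) :
    GaugeLipschitz M (-h) := fun s hs t ht hst ↦ by
  simpa [abs_sub_comm, neg_add_eq_sub] using hh s hs t ht hst

lemma GaugeLipschitz.continuousOn {M : ℝ} {h : ℝ → ℝ} (hh : GaugeLipschitz M h) :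
    ContinuousOn h (Icc 0 1) := by
  have hle (s : ℝ) (hs : s ∈ Icc 0 1) (t : ℝ) (ht : t ∈ Icc 0 1) :
      ‖h t - h s‖ ≤ M * |gauge t - gauge s| := by
    rcases le_total s t with hst | hst
    · exact (hh s hs t ht hst).trans (mul_le_mul_of_nonneg_left (le_abs_self _) hh.nonneg)
    · rw [norm_sub_rev, abs_sub_comm]
      exact (hh t ht s hs hst).trans (mul_le_mul_of_nonneg_left (le_abs_self _) hh.nonneg)
  intro s hs
  refine tendsto_iff_norm_sub_tendsto_zero.2 (squeeze_zero' (.of_forall fun t ↦ norm_nonneg _)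
    (eventually_mem_nhdsWithin.mono fun t ↦ hle s hs t) ?_)
  have hgauge : Tendsto gauge (𝓝[Icc 0 1] s) (𝓝 (gauge s)) :=
    (hasDerivAt_gauge hs.1).continuousAt.continuousWithinAt
  simpa using (hgauge.sub_const (gauge s)).abs.const_mul M

lemma GaugeLipschitz.isBounded_image {M : ℝ} {h : ℝ → ℝ} (hh : GaugeLipschitz M h) :
    Bornology.IsBounded (h '' Icc 0 1) :=
  (isCompact_Icc.image_of_continuousOn hh.continuousOn).isBounded

lemma tendsto_oddMajorant_atTop : Tendsto oddMajorant atTop (𝓝 0) := by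
  unfold oddMajorant
  simpa [inv_pow] using ((tendsto_one_div_add_atTop (1 / 4)).pow 2).const_mul 0.325

lemma one_div_branch_le_of_odd {j : ℕ} (hj : Odd j) {x y : ℝ} (hy : y ∈ Icc 0 1) (hxy : x ≤ y) :
    1 / branch j x ≤ 1 / branch j y := by
  refine one_div_le_one_div_of_le (by linarith [one_le_branch j hy]) ?_
  rw [branch_of_odd hj, branch_of_odd hj]
  linarith

lemma one_div_branch_le_of_even {j : ℕ} (hj : Even j) {x y : ℝ} (hx : x ∈ Icc 0 1)
    (hxy : x ≤ y) : 1 / branch j y ≤ 1 / branch j x := by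
  refine one_div_le_one_div_of_le (by linarith [one_le_branch j hx]) ?_
  rw [branch_of_even hj, branch_of_even hj]
  linarith

lemma branchProb_mul_gauge_sub_le {j : ℕ} (hj : Odd j) {x y : ℝ} (hx : x ∈ Icc 0 1)
    (hy : y ∈ Icc 0 1) (hxy : x ≤ y) :
    branchProb j x * (gauge (1 / branch j y) - gauge (1 / branch j x)) ≤
      G / 2 * (oddMajorant (branch j y) - oddMajorant (branch j x) -
        (oddMajorant (branch (j + 2) y) - oddMajorant (branch (j + 2) x))) := by
  have hle : branch j y ≤ branch j x := by
    rw [branch_of_odd hj, branch_of_odd hj]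
    linarith
  have hj₁ : (1 : ℝ) ≤ j := mod_cast hj.pos
  have hgauge : gauge (1 / branch j x) ≤ gauge (1 / branch j y) :=
    monotoneOn_gauge (one_div_branch_mem j hx) (one_div_branch_mem j hy)
      (one_div_branch_le_of_odd hj hy hxy)
  have hdensity : 1 / invDensity x ≤ G / 2 := by
    linarith [two_div_invDensity_le hx, mul_one_div 2 (invDensity x)]
  calc branchProb j x * (gauge (1 / branch j y) - gauge (1 / branch j x))
    _ = 1 / invDensity x *
          (recipDensity (branch j x) * (gauge (1 / branch j y) - gauge (1 / branch j x))) := by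
        rw [branchProb]
        ring
    _ ≤ G / 2 *
          (recipDensity (branch j x) * (gauge (1 / branch j y) - gauge (1 / branch j x))) := by
        gcongr
        exact mul_nonneg (recipDensity_nonneg (one_le_branch j hx)) (sub_nonneg.2 hgauge)
    _ ≤ _ := by
        rw [branch_add_two, branch_add_two]
        gcongr
        · linarith [lt_G]
        · exact recipDensity_mul_gauge_sub_le
            (by linarith [(branch_mem_Icc j hy).1]) hle

/-- The increment of `oddMajorant` along an odd branch, extended by zero to even branches. -/
noncomputable def oddIncrement (x y : ℝ) (j : ℕ) : ℝ :=
  if Even j then 0 else oddMajorant (branch j y) - oddMajorant (branch j x)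

lemma oddIncrement_of_even {j : ℕ} (hj : Even j) (x y : ℝ) : oddIncrement x y j = 0 := if_pos hj

lemma oddIncrement_of_odd {j : ℕ} (hj : Odd j) (x y : ℝ) :
    oddIncrement x y j = oddMajorant (branch j y) - oddMajorant (branch j x) :=
  if_neg (Nat.not_even_iff_odd.2 hj)

lemma tendsto_oddIncrement {x y : ℝ} (hx : x ∈ Icc 0 1) (hy : y ∈ Icc 0 1) :
    Tendsto (oddIncrement x y) atTop (𝓝 0) := by
  have hlim := (tendsto_oddMajorant_atTop.comp (tendsto_branch_atTop hy)).sub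
    (tendsto_oddMajorant_atTop.comp (tendsto_branch_atTop hx))
  rw [sub_zero] at hlim
  refine squeeze_zero_norm (fun j ↦ ?_) (tendsto_zero_iff_norm_tendsto_zero.1 hlim)
  unfold oddIncrement
  split_ifs <;> simp

lemma oddIncrement_sub_nonneg {x y : ℝ} (hx : x ∈ Icc 0 1) (hy : y ∈ Icc 0 1) (hxy : x ≤ y)
    (j : ℕ) : 0 ≤ oddIncrement x y j - oddIncrement x y (j + 2) := by
  rcases j.even_or_odd with hj | hj
  · rw [oddIncrement_of_even hj, oddIncrement_of_even (hj.add even_two), sub_zero]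
  · rw [oddIncrement_of_odd hj, oddIncrement_of_odd (hj.add_even even_two)]
    have hgauge := monotoneOn_gauge (one_div_branch_mem j hx) (one_div_branch_mem j hy)
      (one_div_branch_le_of_odd hj hy hxy)
    have hle := (mul_nonneg (branchProb_nonneg j hx) (sub_nonneg.2 hgauge)).trans
      (branchProb_mul_gauge_sub_le hj hx hy hxy)
    exact nonneg_of_mul_nonneg_right hle (by linarith [lt_G])

lemma hasSum_oddIncrement_sub {x y : ℝ} (hx : x ∈ Icc 0 1) (hy : y ∈ Icc 0 1) (hxy : x ≤ y) :
    HasSum (fun j ↦ oddIncrement x y j - oddIncrement x y (j + 2))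
      (oddMajorant (3 - y) - oddMajorant (3 - x)) := by
  have hsum := hasSum_sub_add 2 (fun j ↦ sub_nonneg.1 (oddIncrement_sub_nonneg hx hy hxy j))
    (tendsto_oddIncrement hx hy)
  simpa [Finset.sum_range_succ, oddIncrement, branch_one] using hsum

lemma branchProb_mul_sub_le {φ : ℝ → ℝ} {c : ℝ} (hc : 0 ≤ c) (hφ : MonotoneOn φ (Icc 0 1))
    (hφc : ∀ s ∈ Icc 0 1, ∀ t ∈ Icc 0 1, s ≤ t → φ t - φ s ≤ c * (gauge t - gauge s))
    {x y : ℝ} (hx : x ∈ Icc 0 1) (hy : y ∈ Icc 0 1) (hxy : x ≤ y) (j : ℕ) :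
    branchProb j x * (φ (1 / branch j y) - φ (1 / branch j x)) ≤
      c * (G / 2) * (oddIncrement x y j - oddIncrement x y (j + 2)) := by
  have hxj := one_div_branch_mem j hx
  have hyj := one_div_branch_mem j hy
  have hprob := branchProb_nonneg j hx
  rcases j.even_or_odd with hj | hj
  · rw [oddIncrement_of_even hj, oddIncrement_of_even (hj.add even_two), sub_zero, mul_zero]
    exact mul_nonpos_of_nonneg_of_nonpos hprob
      (sub_nonpos.2 (hφ hyj hxj (one_div_branch_le_of_even hj hx hxy)))
  · rw [oddIncrement_of_odd hj, oddIncrement_of_odd (hj.add_even even_two)]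
    calc _ ≤ branchProb j x * (c * (gauge (1 / branch j y) - gauge (1 / branch j x))) := by
          gcongr
          exact hφc _ hxj _ hyj (one_div_branch_le_of_odd hj hy hxy)
      _ = c * (branchProb j x * (gauge (1 / branch j y) - gauge (1 / branch j x))) := by ring
      _ ≤ _ := by
          rw [mul_assoc]
          exact mul_le_mul_of_nonneg_left (branchProb_mul_gauge_sub_le hj hx hy hxy) hc

lemma transfer_sub_transfer_le {φ : ℝ → ℝ} {c : ℝ} (hc : 0 ≤ c) (hφ : MonotoneOn φ (Icc 0 1))
    (hφc : ∀ s ∈ Icc 0 1, ∀ t ∈ Icc 0 1, s ≤ t → φ t - φ s ≤ c * (gauge t - gauge s))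
    {x y : ℝ} (hx : x ∈ Icc 0 1) (hy : y ∈ Icc 0 1) (hxy : x ≤ y) :
    transfer φ y - transfer φ x ≤ c * (G / 2) * (oddMajorant (3 - y) - oddMajorant (3 - x)) := by
  have hbdd := isBounded_image_of_monotoneOn hφ
  have hUx := hasSum_transfer hbdd hx
  have hUy := hasSum_transfer hbdd hy
  have hmid := summable_branchProb_mul hbdd hx fun j ↦ one_div_branch_mem j hy
  have hprob : transfer φ y - ∑' j, branchProb j x * φ (1 / branch j y) ≤ 0 := by
    rw [← (hUy.sub hmid.hasSum).tsum_eq]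
    simpa only [sub_mul] using tsum_branchProb_sub_mul_nonpos hφ hx hy hxy
  have hpoint : ∑' j, branchProb j x * φ (1 / branch j y) - transfer φ x ≤
      c * (G / 2) * (oddMajorant (3 - y) - oddMajorant (3 - x)) := by
    refine hasSum_le (fun j ↦ ?_) (hmid.hasSum.sub hUx)
      ((hasSum_oddIncrement_sub hx hy hxy).mul_left (c * (G / 2)))
    rw [← mul_sub]
    exact branchProb_mul_sub_le hc hφ hφc hx hy hxy j
  linarith

lemma transfer_const_mul_gauge_add {M : ℝ} {h : ℝ → ℝ} (hh : Bornology.IsBounded (h '' Icc 0 1))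
    {x : ℝ} (hx : x ∈ Icc 0 1) :
    transfer (fun t ↦ M * gauge t + h t) x = M * transfer gauge x + transfer h x := by
  have hgauge := hasSum_transfer (isBounded_image_of_monotoneOn monotoneOn_gauge) hx
  rw [← ((hgauge.mul_left M).add (hasSum_transfer hh hx)).tsum_eq, transfer]
  exact tsum_congr fun j ↦ by ring

lemma GaugeLipschitz.transfer_sub_le {M : ℝ} {h : ℝ → ℝ} (hh : GaugeLipschitz M h) {x y : ℝ}
    (hx : x ∈ Icc 0 1) (hy : y ∈ Icc 0 1) (hxy : x ≤ y) :
    transfer h y - transfer h x ≤ 0.37 * M * (gauge y - gauge x) := by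
  have hle := transfer_sub_transfer_le (φ := fun t ↦ M * gauge t + h t) (c := 2 * M)
    (by linarith [hh.nonneg])
    (fun s hs t ht hst ↦ by linarith [(abs_le.1 (hh s hs t ht hst)).1])
    (fun s hs t ht hst ↦ by linarith [(abs_le.1 (hh s hs t ht hst)).2]) hx hy hxy
  rw [transfer_const_mul_gauge_add hh.isBounded_image hx,
    transfer_const_mul_gauge_add hh.isBounded_image hy] at hle
  have hmaj := mul_le_mul_of_nonneg_left
    (monotoneOn_gauge_add_transfer_gauge_sub_oddMajorant hx hy hxy) hh.nonneg
  dsimp only at hmaj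
  linarith

theorem GaugeLipschitz.transfer {M : ℝ} {h : ℝ → ℝ} (hh : GaugeLipschitz M h) :
    GaugeLipschitz (0.37 * M) (OCF.transfer h) := fun x hx y hy hxy ↦ by
  have hneg := hh.neg.transfer_sub_le hx hy hxy
  have htransfer (z : ℝ) : OCF.transfer (-h) z = -OCF.transfer h z := by
    simp [OCF.transfer, tsum_neg]
  rw [htransfer, htransfer] at hneg
  exact abs_le.2 ⟨by linarith, hh.transfer_sub_le hx hy hxy⟩

theorem GaugeLipschitz.iterate_transfer {M : ℝ} {h : ℝ → ℝ} (hh : GaugeLipschitz M h) (n : ℕ) :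
    GaugeLipschitz (0.37 ^ n * M) (OCF.transfer^[n] h) := by
  induction n with
  | zero => simpa using hh
  | succ n ih => rw [Function.iterate_succ_apply', pow_succ', mul_assoc]; exact ih.transfer

/-! ### The odd Gauss map and its inverse branches -/

lemma T_of_odd {z : ℝ} (hz : z ≠ 0) (hodd : Odd ⌊1 / z⌋) : T z = 1 / z - ⌊1 / z⌋ := by
  rw [T, if_neg hz, if_pos hodd, Int.fract]

lemma T_of_even {z : ℝ} (hz : z ≠ 0) (heven : Even ⌊1 / z⌋) : T z = 1 + ⌊1 / z⌋ - 1 / z := by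
  rw [T, if_neg hz, if_neg (Int.not_odd_iff_even.2 heven), Int.fract]
  ring

lemma T_mem_Icc (z : ℝ) : T z ∈ Icc 0 1 := by
  have h₀ := Int.fract_nonneg (1 / z)
  have h₁ := (Int.fract_lt_one (1 / z)).le
  unfold T
  split_ifs <;> constructor <;> linarith

lemma measurable_T : Measurable T := by
  have hinv : Measurable fun x : ℝ ↦ 1 / x := measurable_id.const_div 1
  have hodd : MeasurableSet {x : ℝ | Odd ⌊1 / x⌋} :=
    Int.measurable_floor.comp hinv (MeasurableSet.of_discrete (s := {k : ℤ | Odd k}))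
  have hfract : Measurable fun x : ℝ ↦ Int.fract (1 / x) := measurable_fract.comp hinv
  exact .ite (measurableSet_singleton 0) measurable_const (.ite hodd hfract (hfract.const_sub 1))

lemma irrational_T {z : ℝ} (hz : Irrational z) : Irrational (T z) := by
  have hinv : Irrational (1 / z) := by simpa using hz.inv
  rcases Int.even_or_odd ⌊1 / z⌋ with heven | hodd
  · rw [T_of_even hz.ne_zero heven]
    exact_mod_cast hinv.intCast_sub (1 + ⌊1 / z⌋)
  · rw [T_of_odd hz.ne_zero hodd]
    exact hinv.sub_intCast _

lemma irrational_iterate_T {z : ℝ} (hz : Irrational z) (n : ℕ) : Irrational (T^[n] z) := by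
  induction n with
  | zero => exact hz
  | succ n ih => rw [Function.iterate_succ_apply']; exact irrational_T ih

lemma r_one {z : ℝ} (hz : z ≠ 0) : r z 1 = 1 / z := by
  rcases Int.even_or_odd ⌊1 / z⌋ with heven | hodd
  · have ha : a z 1 = 1 + ⌊1 / z⌋ := if_neg (Int.not_odd_iff_even.2 heven)
    have heps : eps z 1 = -1 := if_neg (Int.not_odd_iff_even.2 heven)
    rw [r, ha, heps, Function.iterate_one, T_of_even hz heven]
    push_cast
    ring
  · have ha : a z 1 = ⌊1 / z⌋ := if_pos hodd
    have heps : eps z 1 = 1 := if_pos hodd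
    rw [r, ha, heps, Function.iterate_one, T_of_odd hz hodd]
    push_cast
    ring

lemma one_div_r_succ {y : ℝ} (hy : Irrational y) (n : ℕ) : 1 / r y (n + 1) = T^[n] y := by
  have hr : r y (n + 1) = r (T^[n] y) 1 := by
    simp only [r, a, eps, Function.iterate_succ_apply', Function.iterate_zero_apply]
    rfl
  rw [hr, r_one (irrational_iterate_T hy n).ne_zero, one_div_one_div]

lemma floor_branch (j : ℕ) {x : ℝ} (hx : x ∈ Ioo 0 1) : ⌊branch j x⌋ = j + 1 := by
  rw [Int.floor_eq_iff]
  unfold branch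
  split_ifs <;> push_cast <;> constructor <;> linarith [hx.1, hx.2]

lemma T_one_div_branch (j : ℕ) {x : ℝ} (hx : x ∈ Ioo 0 1) : T (1 / branch j x) = x := by
  have hne : 1 / branch j x ≠ 0 :=
    one_div_ne_zero (by linarith [one_le_branch j (Ioo_subset_Icc_self hx)])
  have hfloor := floor_branch j hx
  rcases j.even_or_odd with hj | hj
  · rw [T_of_odd hne (by rw [one_div_one_div, hfloor]; exact_mod_cast hj.add_one),
      one_div_one_div, hfloor, branch_of_even hj]
    push_cast
    ring
  · rw [T_of_even hne (by rw [one_div_one_div, hfloor]; exact_mod_cast hj.add_one),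
      one_div_one_div, hfloor, branch_of_odd hj]
    push_cast
    ring

lemma exists_one_div_branch_eq {z : ℝ} (hz : Irrational z) (hz' : z ∈ Ioo 0 1) :
    ∃ j, 1 / branch j (T z) = z := by
  have hfloor : 1 ≤ ⌊1 / z⌋ := by
    rw [Int.le_floor, Int.cast_one]
    exact (one_lt_one_div hz'.1 hz'.2).le
  obtain ⟨j, hj⟩ := Int.eq_ofNat_of_zero_le (sub_nonneg.2 hfloor)
  replace hj : ⌊1 / z⌋ = j + 1 := by omega
  suffices hbranch : branch j (T z) = 1 / z from ⟨j, by rw [hbranch, one_div_one_div]⟩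
  rcases j.even_or_odd with hj' | hj'
  · rw [branch_of_even hj', T_of_odd hz.ne_zero (by rw [hj]; exact_mod_cast hj'.add_one), hj]
    push_cast
    ring
  · rw [branch_of_odd hj', T_of_even hz.ne_zero (by rw [hj]; exact_mod_cast hj'.add_one), hj]
    push_cast
    ring

lemma hasDerivAt_one_div_branch (j : ℕ) {x : ℝ} (hx : x ∈ Icc 0 1) :
    HasDerivAt (fun x ↦ 1 / branch j x) ((-1) ^ (j + 1) / branch j x ^ 2) x := by
  have hbranch : HasDerivAt (branch j) ((-1) ^ j) x := by
    rcases j.even_or_odd with hj | hj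
    · rw [hj.neg_one_pow, funext (branch_of_even hj)]
      exact (hasDerivAt_id' x).const_add _
    · rw [hj.neg_one_pow, funext (branch_of_odd hj)]
      exact (hasDerivAt_id' x).const_sub _
  have hne : branch j x ≠ 0 := by linarith [one_le_branch j hx]
  simpa only [one_div, pow_succ, mul_neg_one] using hbranch.fun_inv hne

lemma iUnion_image_one_div_branch_ae_eq :
    (⋃ j, (fun x ↦ 1 / branch j x) '' Ioo 0 1 : Set ℝ) =ᵐ[volume] Icc 0 1 := by
  refine EventuallyLE.antisymm ?_ ?_
  · refine LE.le.eventuallyLE (iUnion_subset fun j ↦ ?_)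
    rintro _ ⟨x, hx, rfl⟩
    exact one_div_branch_mem j (Ioo_subset_Icc_self hx)
  · filter_upwards [(countable_range ((↑) : ℚ → ℝ)).ae_notMem volume] with z hz hz'
    have hz : Irrational z := hz
    have hT := irrational_T hz
    obtain ⟨j, hj⟩ := exists_one_div_branch_eq hz
      ⟨hz'.1.lt_of_ne hz.ne_zero.symm, hz'.2.lt_of_ne hz.ne_one⟩
    exact mem_iUnion.2 ⟨j, T z, ⟨(T_mem_Icc z).1.lt_of_ne hT.ne_zero.symm,
      (T_mem_Icc z).2.lt_of_ne hT.ne_one⟩, hj⟩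

lemma pairwise_disjoint_image_one_div_branch :
    Pairwise (Function.onFun Disjoint fun j ↦ (fun x ↦ 1 / branch j x) '' Ioo (0 : ℝ) 1) := by
  intro i j hij
  rw [Function.onFun, Set.disjoint_left]
  rintro _ ⟨x, hx, rfl⟩ ⟨y, hy, hxy⟩
  refine hij ?_
  have hfloor := congrArg (fun z ↦ ⌊1 / z⌋) hxy
  simp only [one_div_one_div, floor_branch _ hx, floor_branch _ hy] at hfloor
  omega

/-! ### The evolution of densities -/

/-- The invariant measure of `T`, not normalised: its total mass is `3 log G`. -/
noncomputable def invMeasure : Measure ℝ :=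
  (volume.restrict (Icc 0 1)).withDensity fun x ↦ ENNReal.ofReal (invDensity x)

lemma ae_mem_Icc_invMeasure : ∀ᵐ x ∂invMeasure, x ∈ Icc (0 : ℝ) 1 :=
  (withDensity_absolutelyContinuous _ _).ae_le (ae_restrict_mem measurableSet_Icc)

instance : NullSingletonClass invMeasure := by unfold invMeasure; infer_instance

lemma invMeasure_withDensity {h : ℝ → ℝ} (hh : ContinuousOn h (Icc 0 1)) :
    invMeasure.withDensity (fun x ↦ ENNReal.ofReal (h x)) =
      (volume.restrict (Icc 0 1)).withDensity fun x ↦ ENNReal.ofReal (h x * invDensity x) := by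
  rw [invMeasure, ← withDensity_mul₀
    (continuousOn_invDensity.aemeasurable measurableSet_Icc).ennreal_ofReal
    (hh.aemeasurable measurableSet_Icc).ennreal_ofReal]
  refine withDensity_congr_ae ((ae_restrict_mem measurableSet_Icc).mono fun x hx ↦ ?_)
  simp only [Pi.mul_apply]
  rw [mul_comm, ENNReal.ofReal_mul' (invDensity_pos hx).le]

lemma tsum_ofReal_branch {h : ℝ → ℝ} (hbdd : Bornology.IsBounded (h '' Icc 0 1))
    (hh : ∀ x ∈ Icc 0 1, 0 ≤ h x) {x : ℝ} (hx : x ∈ Icc 0 1) :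
    ∑' j : ℕ, ENNReal.ofReal |(-1) ^ (j + 1) / branch j x ^ 2| *
        ENNReal.ofReal (h (1 / branch j x) * invDensity (1 / branch j x)) =
      ENNReal.ofReal (transfer h x * invDensity x) := by
  have hρ := invDensity_pos hx
  have hterm (j : ℕ) : |(-1) ^ (j + 1) / branch j x ^ 2| *
      (h (1 / branch j x) * invDensity (1 / branch j x)) =
        branchProb j x * h (1 / branch j x) * invDensity x := by
    have hb := one_le_branch j hx
    rw [abs_div, abs_neg_one_pow, abs_of_pos (by positivity), invDensity_one_div hb, branchProb]
    field_simp
  simp only [← ENNReal.ofReal_mul (abs_nonneg _), hterm]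
  rw [← ENNReal.ofReal_tsum_of_nonneg, tsum_mul_right, transfer]
  · exact fun j ↦ mul_nonneg
      (mul_nonneg (branchProb_nonneg j hx) (hh _ (one_div_branch_mem j hx))) hρ.le
  · exact (hasSum_transfer hbdd hx).summable.mul_right _

theorem GaugeLipschitz.map_T {M : ℝ} {h : ℝ → ℝ} (hh : GaugeLipschitz M h)
    (hnonneg : ∀ x ∈ Icc 0 1, 0 ≤ h x) :
    (invMeasure.withDensity fun x ↦ ENNReal.ofReal (h x)).map T =
      invMeasure.withDensity fun x ↦ ENNReal.ofReal (OCF.transfer h x) := by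
  have hderiv (j : ℕ) (x : ℝ) (hx : x ∈ Ioo 0 1) :=
    hasDerivAt_one_div_branch j (Ioo_subset_Icc_self hx)
  have hmeas (j : ℕ) : AEMeasurable (fun x ↦ ENNReal.ofReal |(-1) ^ (j + 1) / branch j x ^ 2| *
      ENNReal.ofReal (h (1 / branch j x) * invDensity (1 / branch j x)))
      (volume.restrict (Ioo 0 1)) := by
    have hbranch : ContinuousOn (fun x ↦ 1 / branch j x) (Ioo 0 1) :=
      fun x hx ↦ (hderiv j x hx).continuousAt.continuousWithinAt
    have hcomp := (hh.continuousOn.mul continuousOn_invDensity).comp hbranch fun x hx ↦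
      one_div_branch_mem j (Ioo_subset_Icc_self hx)
    have hderiv' : Measurable fun x ↦ |(-1) ^ (j + 1) / branch j x ^ 2| := by
      unfold branch
      split_ifs <;> fun_prop
    exact hderiv'.ennreal_ofReal.aemeasurable.mul
      (hcomp.aemeasurable measurableSet_Ioo).ennreal_ofReal
  rw [invMeasure_withDensity hh.continuousOn, invMeasure_withDensity hh.transfer.continuousOn,
    map_withDensity_eq_tsum_branches measurable_T measurableSet_Ioo
      (fun j x hx ↦ (hderiv j x hx).hasDerivWithinAt) (fun j x hx ↦ T_one_div_branch j hx)
      pairwise_disjoint_image_one_div_branch iUnion_image_one_div_branch_ae_eq hmeas,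
    Measure.restrict_congr_set Ioo_ae_eq_Icc]
  exact withDensity_congr_ae ((ae_restrict_mem measurableSet_Icc).mono fun x hx ↦
    tsum_ofReal_branch hh.isBounded_image hnonneg hx)

theorem GaugeLipschitz.map_iterate_T {M : ℝ} {h : ℝ → ℝ} (hh : GaugeLipschitz M h)
    (hnonneg : ∀ x ∈ Icc 0 1, 0 ≤ h x) (n : ℕ) :
    (invMeasure.withDensity fun x ↦ ENNReal.ofReal (h x)).map T^[n] =
      invMeasure.withDensity fun x ↦ ENNReal.ofReal (OCF.transfer^[n] h x) := by
  induction n with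
  | zero => exact Measure.map_id
  | succ n ih =>
    rw [Function.iterate_succ', ← Measure.map_map measurable_T (measurable_T.iterate n), ih,
      (hh.iterate_transfer n).map_T (iterate_transfer_nonneg hnonneg n),
      Function.iterate_succ_apply']

/-! ### Distribution functions -/

instance : IsFiniteMeasure invMeasure :=
  isFiniteMeasure_withDensity_ofReal_of_continuousOn continuousOn_invDensity

lemma hasDerivAt_log_invDensity {x : ℝ} (hx : x ∈ Icc 0 1) :
    HasDerivAt (fun x ↦ Real.log ((G + 1) * (G - 1 + x) / ((G - 1) * (G + 1 - x))))
      (invDensity x) x := by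
  have hG := lt_G
  have h₁ : G - 1 + x ≠ 0 := by linarith [hx.1]
  have h₂ : G + 1 - x ≠ 0 := by linarith [hx.2]
  have h₃ : G - 1 ≠ 0 := by linarith
  have hnum : HasDerivAt (fun x ↦ (G + 1) * (G - 1 + x)) (G + 1) x := by
    simpa using ((hasDerivAt_id' x).const_add (G - 1)).const_mul (G + 1)
  have hden : HasDerivAt (fun x ↦ (G - 1) * (G + 1 - x)) (-(G - 1)) x := by
    simpa using ((hasDerivAt_id' x).const_sub (G + 1)).const_mul (G - 1)
  refine ((hnum.fun_div hden (by positivity)).log (by positivity)).congr_deriv ?_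
  have h₄ : x + G - 1 ≠ 0 := by linarith [hx.1]
  unfold invDensity
  field_simp
  ring

lemma invMeasure_real_Iio {x : ℝ} (hx : x ∈ Icc 0 1) :
    invMeasure.real (Iio x) =
      Real.log ((G + 1) * (G - 1 + x) / ((G - 1) * (G + 1 - x))) := by
  have hG := lt_G
  have hone : (G + 1) * (G - 1 + 0) / ((G - 1) * (G + 1 - 0)) = 1 := by
    rw [add_zero, sub_zero, mul_comm]
    exact div_self (mul_ne_zero (by linarith) (by linarith))
  rw [measureReal_congr Iio_ae_eq_Iic, invMeasure, withDensity_real_Iic_eq_sub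
    (fun t ht ↦ (hasDerivAt_log_invDensity ht).hasDerivWithinAt) continuousOn_invDensity
    (fun t ht ↦ (invDensity_pos ht).le) hx, hone, Real.log_one, sub_zero]

lemma invMeasure_real_univ : invMeasure.real univ = 3 * Real.log G := by
  have hG := lt_G
  have huniv : (univ : Set ℝ) =ᵐ[invMeasure] Iio 1 := by
    filter_upwards [ae_mem_Icc_invMeasure, Measure.ae_ne invMeasure 1] with x hx hx1
    exact propext ⟨fun _ ↦ hx.2.lt_of_ne hx1, fun _ ↦ trivial⟩
  have hcube : (G + 1) * (G - 1 + 1) / ((G - 1) * (G + 1 - 1)) = G ^ 3 := by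
    have h₁ : G - 1 ≠ 0 := by linarith
    rw [sub_add_cancel, add_sub_cancel_right]
    field_simp
    linear_combination (-G ^ 2 - 1) * G_sq
  rw [measureReal_congr huniv, invMeasure_real_Iio (by simp), hcube, Real.log_pow]
  norm_num

lemma GaugeLipschitz.abs_sub_le {M : ℝ} {h : ℝ → ℝ} (hh : GaugeLipschitz M h) {s t : ℝ}
    (hs : s ∈ Icc 0 1) (ht : t ∈ Icc 0 1) : |h t - h s| ≤ M * (gauge 1 - gauge 0) := by
  wlog hst : s ≤ t generalizing s t
  · rw [abs_sub_comm]
    exact this ht hs (le_of_not_ge hst)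
  have h₀ := monotoneOn_gauge (left_mem_Icc.2 zero_le_one) hs hs.1
  have h₁ := monotoneOn_gauge ht (right_mem_Icc.2 zero_le_one) ht.2
  exact (hh s hs t ht hst).trans (mul_le_mul_of_nonneg_left (by linarith) hh.nonneg)

theorem GaugeLipschitz.abs_real_sub_le {M : ℝ} {h : ℝ → ℝ} (hh : GaugeLipschitz M h)
    (hnonneg : ∀ x ∈ Icc 0 1, 0 ≤ h x)
    [IsProbabilityMeasure (invMeasure.withDensity fun x ↦ ENNReal.ofReal (h x))]
    {A : Set ℝ} (hA : MeasurableSet A) :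
    |(invMeasure.withDensity fun x ↦ ENNReal.ofReal (h x)).real A -
        (3 * Real.log G)⁻¹ * invMeasure.real A| ≤
      M * (gauge 1 - gauge 0) * (3 * Real.log G) := by
  have hmeas : AEStronglyMeasurable h invMeasure :=
    (hh.continuousOn.aestronglyMeasurable measurableSet_Icc).mono_ac
      (withDensity_absolutelyContinuous _ _)
  have hint : Integrable h invMeasure := by
    obtain ⟨C, hC⟩ := hh.isBounded_image.exists_norm_le
    exact .of_bound hmeas C
      (ae_mem_Icc_invMeasure.mono fun x hx ↦ hC _ (mem_image_of_mem h hx))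
  have hreal {B : Set ℝ} (hB : MeasurableSet B) :
      (invMeasure.withDensity fun x ↦ ENNReal.ofReal (h x)).real B = ∫ x in B, h x ∂invMeasure := by
    rw [measureReal_def, withDensity_apply _ hB, integral_eq_lintegral_of_nonneg_ae
      (ae_restrict_of_ae (ae_mem_Icc_invMeasure.mono hnonneg)) hmeas.restrict]
  have haverage : ⨍ x, h x ∂invMeasure = (3 * Real.log G)⁻¹ := by
    rw [average_eq, invMeasure_real_univ, ← setIntegral_univ, ← hreal .univ, probReal_univ,
      smul_eq_mul, mul_one]
  have hosc : ∀ᵐ s ∂invMeasure, ∀ᵐ t ∂invMeasure, |h t - h s| ≤ M * (gauge 1 - gauge 0) :=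
    ae_mem_Icc_invMeasure.mono fun s hs ↦ ae_mem_Icc_invMeasure.mono fun t ↦ hh.abs_sub_le hs
  have hbound := abs_setIntegral_sub_average_le hint hosc A
  rw [← hreal hA, haverage, mul_comm (invMeasure.real A)] at hbound
  have hδ := (abs_nonneg _).trans (hh.abs_sub_le (s := 0) (t := 0) (by simp) (by simp))
  rw [← invMeasure_real_univ]
  rw [← invMeasure_real_univ] at hbound
  exact hbound.trans (mul_le_mul_of_nonneg_left (measureReal_mono (subset_univ A)) hδ)

lemma H_eq_map_iterate_T (μ : Measure ℝ) [NullSingletonClass μ] (hμ : μ (Icc 0 1)ᶜ = 0) (n : ℕ)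
    (x : ℝ) : H μ n x = (μ.map T^[n]).real (Iio x) := by
  have hmem : ∀ᵐ z ∂μ, z ∈ Icc (0 : ℝ) 1 := mem_ae_iff.2 hμ
  rw [map_measureReal_apply (measurable_T.iterate n) measurableSet_Iio]
  cases n with
  | zero =>
    refine measureReal_congr ?_
    filter_upwards [hmem, Measure.ae_ne μ x] with z hz hzx
    exact propext ⟨fun h ↦ lt_of_le_of_ne h.2 hzx, fun h ↦ ⟨hz.1, le_of_lt h⟩⟩
  | succ n =>
    refine measureReal_congr ?_
    filter_upwards [hmem, (countable_range ((↑) : ℚ → ℝ)).ae_notMem μ] with z hz hirr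
    have hirr : Irrational z := hirr
    refine propext ⟨fun ⟨_, _, hr⟩ ↦ ?_, fun hTz ↦ ⟨⟨?_, ?_⟩, hirr, ?_⟩⟩
    · rwa [one_div_r_succ hirr] at hr
    · exact hz.1.lt_of_ne hirr.ne_zero.symm
    · exact hz.2.lt_of_ne hirr.ne_one
    · rwa [one_div_r_succ hirr]

lemma invDensity_eq_inv_sub_inv (x : ℝ) :
    invDensity x = (x + G - 1)⁻¹ - (x - G - 1)⁻¹ := by
  rw [invDensity, show x - G - 1 = -(G + 1 - x) by ring, inv_neg, sub_neg_eq_add, one_div, one_div]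

lemma h_mul_invDensity (μ : Measure ℝ) (n : ℕ) {x : ℝ} (hx : x ∈ Icc 0 1) :
    h μ n x * invDensity x = derivWithin (H μ n) (Icc 0 1) x := by
  rw [h, ← invDensity_eq_inv_sub_inv, div_mul_cancel₀ _ (invDensity_pos hx).ne']

lemma monotone_H_zero (μ : Measure ℝ) [IsFiniteMeasure μ] : Monotone (H μ 0) := fun _ _ hxy ↦
  measureReal_mono (Icc_subset_Icc_right hxy)

lemma h_zero_nonneg (μ : Measure ℝ) [IsFiniteMeasure μ] {x : ℝ} (hx : x ∈ Icc 0 1) :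
    0 ≤ h μ 0 x := by
  rw [h, ← invDensity_eq_inv_sub_inv]
  exact div_nonneg ((monotone_H_zero μ).monotoneOn _).derivWithin_nonneg (invDensity_pos hx).le

lemma gaugeLipschitz_of_lipschitzOnWith {K : ℝ≥0} {h : ℝ → ℝ}
    (hh : LipschitzOnWith K h (Icc 0 1)) : GaugeLipschitz (K * 4) h := fun s hs t ht hst ↦ by
  have hle := hh.dist_le_mul t ht s hs
  rw [Real.dist_eq, Real.dist_eq, abs_of_nonneg (sub_nonneg.2 hst)] at hle
  rw [mul_assoc]
  exact hle.trans (mul_le_mul_of_nonneg_left (sub_le_four_mul_gauge_sub hs ht hst) K.coe_nonneg)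

lemma exists_gaugeLipschitz_h {μ : Measure ℝ} {n : ℕ} {K : ℝ≥0}
    (hH : LipschitzOnWith K (derivWithin (H μ n) (Icc 0 1)) (Icc 0 1)) :
    ∃ M, GaugeLipschitz M (h μ n) := by
  have hρ : ContDiffOn ℝ 1 (fun x ↦ (invDensity x)⁻¹) (Icc 0 1) :=
    (contDiffOn_invDensity (n := 1)).inv fun x hx ↦ (invDensity_pos hx).ne'
  obtain ⟨L, hL⟩ := hρ.exists_lipschitzOnWith one_ne_zero (convex_Icc 0 1) isCompact_Icc
  obtain ⟨C, hC⟩ := exists_lipschitzOnWith_mul hH hL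
    (isCompact_Icc.image_of_continuousOn hH.continuousOn).isBounded
    (isCompact_Icc.image_of_continuousOn hL.continuousOn).isBounded
  have hh : h μ n = fun x ↦ derivWithin (H μ n) (Icc 0 1) x * (invDensity x)⁻¹ :=
    funext fun x ↦ by rw [h, ← invDensity_eq_inv_sub_inv, div_eq_mul_inv]
  exact ⟨C * 4, gaugeLipschitz_of_lipschitzOnWith (hh ▸ hC)⟩

theorem eq_invMeasure_withDensity_h_zero {μ : Measure ℝ} [IsFiniteMeasure μ]
    [NullSingletonClass μ] (hμ : μ (Icc 0 1)ᶜ = 0) (hH : DifferentiableOn ℝ (H μ 0) (Icc 0 1))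
    (hcont : ContinuousOn (h μ 0) (Icc 0 1)) :
    μ = invMeasure.withDensity fun x ↦ ENNReal.ofReal (h μ 0 x) := by
  have hdens : ContinuousOn (fun x ↦ h μ 0 x * invDensity x) (Icc 0 1) :=
    hcont.mul continuousOn_invDensity
  have := isFiniteMeasure_withDensity_ofReal_of_continuousOn hdens
  rw [invMeasure_withDensity hcont]
  refine ext_of_Iic_of_compl_Icc_null zero_le_one hμ
    (withDensity_absolutelyContinuous _ _ (by simp [Measure.restrict_apply])) fun x hx ↦ ?_
  have hderiv (t : ℝ) (ht : t ∈ Icc 0 1) :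
      HasDerivWithinAt (H μ 0) (h μ 0 t * invDensity t) (Icc 0 1) t := by
    rw [h_mul_invDensity μ 0 ht]
    exact (hH t ht).hasDerivWithinAt
  have hH₀ : H μ 0 0 = 0 := by simp [H]
  rw [withDensity_real_Iic_eq_sub hderiv hdens
    (fun t ht ↦ mul_nonneg (h_zero_nonneg μ ht) (invDensity_pos ht).le) hx, hH₀, sub_zero,
    H_eq_map_iterate_T μ hμ, Function.iterate_zero, Measure.map_id,
    measureReal_congr Iio_ae_eq_Iic]

theorem exists_abs_H_sub_le_mul_pow {μ : Measure ℝ} [IsProbabilityMeasure μ]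
    [NullSingletonClass μ] (hμ : μ (Icc 0 1)ᶜ = 0) (hH : DifferentiableOn ℝ (H μ 0) (Icc 0 1))
    {K : ℝ≥0} (hH' : LipschitzOnWith K (derivWithin (H μ 0) (Icc 0 1)) (Icc 0 1)) :
    ∃ C, 0 < C ∧ ∀ n x,
      |H μ n x - (3 * Real.log G)⁻¹ * invMeasure.real (Iio x)| ≤ C * 0.37 ^ n := by
  obtain ⟨M, hM⟩ := exists_gaugeLipschitz_h hH'
  have hnonneg (x : ℝ) (hx : x ∈ Icc 0 1) : 0 ≤ h μ 0 x := h_zero_nonneg μ hx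
  have hdens := eq_invMeasure_withDensity_h_zero hμ hH hM.continuousOn
  have hbound (n : ℕ) (x : ℝ) : |H μ n x - (3 * Real.log G)⁻¹ * invMeasure.real (Iio x)| ≤
      0.37 ^ n * M * (gauge 1 - gauge 0) * (3 * Real.log G) := by
    have hmap : μ.map T^[n] =
        invMeasure.withDensity fun x ↦ ENNReal.ofReal (transfer^[n] (h μ 0) x) := by
      rw [← hM.map_iterate_T hnonneg n, ← hdens]
    have : IsProbabilityMeasure
        (invMeasure.withDensity fun x ↦ ENNReal.ofReal (transfer^[n] (h μ 0) x)) :=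
      hmap ▸ Measure.isProbabilityMeasure_map (measurable_T.iterate n).aemeasurable
    rw [H_eq_map_iterate_T μ hμ, hmap]
    exact (hM.iterate_transfer n).abs_real_sub_le (iterate_transfer_nonneg hnonneg n)
      measurableSet_Iio
  refine ⟨max (M * (gauge 1 - gauge 0) * (3 * Real.log G)) 1, by positivity, fun n x ↦ ?_⟩
  calc _ ≤ 0.37 ^ n * M * (gauge 1 - gauge 0) * (3 * Real.log G) := hbound n x
    _ = M * (gauge 1 - gauge 0) * (3 * Real.log G) * 0.37 ^ n := by ring
    _ ≤ _ := by gcongr; exact le_max_left _ _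

end OCF

theorem ocf_gauss_kuzmin_theorem_general (μ : Measure ℝ) [IsProbabilityMeasure μ]
    [NullSingletonClass μ] (hμ : μ (Icc (0 : ℝ) 1)ᶜ = 0)
    (hH : DifferentiableOn ℝ (H μ 0) (Icc 0 1)) {K : ℝ≥0}
    (hH' : LipschitzOnWith K (derivWithin (H μ 0) (Icc 0 1)) (Icc 0 1)) :
    (0 < eta ∧ eta < 1) ∧
    ∃ C : ℝ, 0 < C ∧ ∀ n : ℕ, ∀ x ∈ Icc (0 : ℝ) 1,
      |H μ n x - (3 * Real.log G)⁻¹ *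
          Real.log ((G + 1) * (G - 1 + x) / ((G - 1) * (G + 1 - x)))| ≤ C * eta ^ n := by
  have heta : 0.37 ≤ eta := le_eta
  obtain ⟨C, hC, hbound⟩ := exists_abs_H_sub_le_mul_pow hμ hH hH'
  refine ⟨⟨by linarith, eta_lt_one⟩, C, hC, fun n x hx ↦ ?_⟩
  calc _ = |H μ n x - (3 * Real.log G)⁻¹ * invMeasure.real (Iio x)| := by
        rw [invMeasure_real_Iio hx]
    _ ≤ C * 0.37 ^ n := hbound n x
    _ ≤ C * eta ^ n := by gcongr

/-- Gauss–Kuzmin-type theorem: if `H_0` is twice continuously differentiable on `[0,1]`, then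
with `η = 4g Σ_{i odd} 1/((G+i) i (i+2)) ∈ (0,1)` there is a constant `C > 0` such that for all
`n ≥ 0` and `x ∈ [0,1]`,
`|H_n(x) - (3 log G)⁻¹ log((G+1)(G-1+x)/((G-1)(G+1-x)))| ≤ C ηⁿ`. -/
theorem ocf_gauss_kuzmin_theorem (μ : Measure ℝ) [IsProbabilityMeasure μ] [NullSingletonClass μ]
    (hμ : μ (Set.Icc (0 : ℝ) 1)ᶜ = 0)
    (h0 : ContDiffOn ℝ 2 (H μ 0) (Set.Icc (0 : ℝ) 1)) :
    (0 < eta ∧ eta < 1) ∧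
    ∃ C : ℝ, 0 < C ∧ ∀ n : ℕ, ∀ x ∈ Set.Icc (0 : ℝ) 1,
      |H μ n x - (3 * Real.log G)⁻¹ *
          Real.log ((G + 1) * (G - 1 + x) / ((G - 1) * (G + 1 - x)))| ≤ C * eta ^ n := by
  obtain ⟨K, hK⟩ := (h0.derivWithin (m := 1) (uniqueDiffOn_Icc one_pos)
    (by norm_num)).exists_lipschitzOnWith one_ne_zero (convex_Icc 0 1) isCompact_Icc
  exact ocf_gauss_kuzmin_theorem_general μ hμ (h0.differentiableOn two_ne_zero) hK
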